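/- For all integers 0 < d < n and every real τ with 0 < τ < 10⁻¹, there exists ε > 0 (depending only on n, d, τ) with the following property. Let E ⊆ ℝ^n be a closed set containing the origin, and suppose that for every x ∈ E ∩ B(0,10) and every 0 < r ≤ 10 there is a d-dimensional affine plane P(x,r) containing x such that dist(y,P(x,r)) ≤ εr for all y ∈ E ∩ B(x,r) and dist(y,E) ≤ εr for all y ∈ P(x,r) ∩ B(x,r). Then there is a bijective map g : ℝ^n → ℝ^n such that: (i) |g(x) − x| ≤ τ for all x ∈ ℝ^n; (ii) (1/4)|x−y|^{1+τ} ≤ |g(x) − g(y)| ≤ 3|x−y|^{1−τ} for all x, y ∈ ℝ^n with |x−y| ≤ 1; and (iii) E ∩ B(0,1) = g(P) ∩ B(0,1), where P = P(0,10). (Reifenberg's topological disk theorem, Theorem 1.1.) -/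

import Mathlib

open Metric Set

noncomputable section

/-- `ℝⁿ`. -/
abbrev V (n : ℕ) := EuclideanSpace ℝ (Fin n)

/-- `P` is a `d`-dimensional affine plane of `ℝⁿ`. -/
def IsAffinePlane (n d : ℕ) (P : Set (V n)) : Prop :=
  ∃ Q : AffineSubspace ℝ (V n), (Q : Set (V n)) = P ∧
    Module.finrank ℝ Q.direction = d ∧ (Q : Set (V n)).Nonempty

/-!
Near `E` and at scale `r`, the projections onto the approximating planes of direction `D x` nearly
agree, so a partition of unity glues them into a map that is close to the identity and flattens a
set `T` already close to `E` at scale `r` into one that is close to `E` at scale `r / 2`. Starting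
from the plane at the origin and composing these perturbations at the scales `(1 / 2) ^ k`, whose
relative size `η` is fixed but arbitrarily small, distances change by a factor between
`(1 - η) ^ k` and `(1 + η) ^ k` after `k` steps, which at distance `(1 / 2) ^ k` is an arbitrarily
small Hölder loss. The limit maps the plane into `E`, and its image covers `E` because the
approximating sets have no holes: one can walk on them in all the directions of the planes.
-/

/-- `φ` is small at scale `r`, with relative size `c`, in a scale invariant `C^{0,1}` sense:
rescaling `s` and the values of `φ` by `1 / r` turns both bounds into bounds by `c`. -/
structure IsSmallAtScaleOn {X Y : Type*} [Norm X] [Sub X] [Norm Y] [Sub Y] (c r : ℝ) (s : Set X)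
    (φ : X → Y) : Prop where
  norm_le : ∀ x ∈ s, ‖φ x‖ ≤ c * r
  norm_sub_le : ∀ x ∈ s, ∀ y ∈ s, ‖φ x - φ y‖ ≤ c * ‖x - y‖

namespace IsSmallAtScaleOn

variable {X Y : Type*} [SeminormedAddCommGroup X] [SeminormedAddCommGroup Y] {c c' r : ℝ}
  {s : Set X} {φ ψ : X → Y}

lemma mono (h : IsSmallAtScaleOn c r s φ) (hc : c ≤ c') (hr : 0 ≤ r) :
    IsSmallAtScaleOn c' r s φ where
  norm_le x hx := (h.norm_le x hx).trans (by gcongr)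
  norm_sub_le x hx y hy := (h.norm_sub_le x hx y hy).trans (by gcongr)

lemma mono_scale {r' : ℝ} (h : IsSmallAtScaleOn c r s φ) (hc : 0 ≤ c) (hr : r ≤ r') :
    IsSmallAtScaleOn c r' s φ where
  norm_le x hx := (h.norm_le x hx).trans (by gcongr)
  norm_sub_le := h.norm_sub_le

lemma subset (h : IsSmallAtScaleOn c r s φ) {t : Set X} (hts : t ⊆ s) :
    IsSmallAtScaleOn c r t φ where
  norm_le x hx := h.norm_le x (hts hx)
  norm_sub_le x hx y hy := h.norm_sub_le x (hts hx) y (hts hy)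

lemma congr (h : IsSmallAtScaleOn c r s φ) (hφψ : EqOn φ ψ s) : IsSmallAtScaleOn c r s ψ where
  norm_le x hx := hφψ hx ▸ h.norm_le x hx
  norm_sub_le x hx y hy := hφψ hx ▸ hφψ hy ▸ h.norm_sub_le x hx y hy

-- To get a bounded extension, prescribe the value `0` at the points at distance at least `r` from
-- `s`: this is compatible with the Lipschitz bound because `φ` is at most `c * r`.
lemma exists_extension {Y : Type*} [NormedAddCommGroup Y] [NormedSpace ℝ Y]
    [FiniteDimensional ℝ Y] {φ : X → Y} (h : IsSmallAtScaleOn c r s φ) (hc : 0 ≤ c) (hr : 0 ≤ r) :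
    ∃ Φ : X → Y, EqOn φ Φ s ∧
      IsSmallAtScaleOn ((1 + lipschitzExtensionConstant Y) * c) r univ Φ := by
  lift c to NNReal using hc
  set far : Set X := {y | ∀ x ∈ s, r ≤ ‖x - y‖}
  have hjump : ∀ x ∈ s, ∀ y ∈ far, ‖φ x‖ ≤ c * ‖x - y‖ := fun x hx y hy =>
    (h.norm_le x hx).trans (by gcongr; exact hy x hx)
  have hlip : LipschitzOnWith c (s.indicator φ) (s ∪ far) := by
    refine LipschitzOnWith.of_dist_le_mul fun x hx y hy => ?_
    rw [dist_eq_norm, dist_eq_norm]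
    by_cases hxs : x ∈ s <;> by_cases hys : y ∈ s
    · simpa [hxs, hys] using h.norm_sub_le x hxs y hys
    · simpa [hxs, hys] using hjump x hxs y (hy.resolve_left hys)
    · simpa [hxs, hys, norm_sub_rev x y] using hjump y hys x (hx.resolve_left hxs)
    · simpa [hxs, hys] using by positivity
  obtain ⟨Φ, hΦ, hΦeq⟩ := hlip.extend_finite_dimension
  have hΦs : EqOn φ Φ s := fun x hx => by rw [← hΦeq (.inl hx), indicator_of_mem hx]
  have hΦlip : ∀ x y, ‖Φ x - Φ y‖ ≤ lipschitzExtensionConstant Y * c * ‖x - y‖ := fun x y => by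
    simpa [dist_eq_norm] using hΦ.dist_le_mul x y
  refine ⟨Φ, hΦs, fun x _ => ?_, fun x _ y _ => (hΦlip x y).trans (by gcongr; linarith)⟩
  by_cases hx : ∃ y ∈ s, ‖x - y‖ ≤ r
  · obtain ⟨y, hy, hxy⟩ := hx
    calc ‖Φ x‖ ≤ ‖Φ y‖ + ‖Φ x - Φ y‖ := norm_le_norm_add_norm_sub' _ _
      _ ≤ c * r + lipschitzExtensionConstant Y * c * ‖x - y‖ :=
        add_le_add (hΦs hy ▸ h.norm_le y hy) (hΦlip x y)
      _ ≤ c * r + lipschitzExtensionConstant Y * c * r := by gcongr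
      _ = (1 + lipschitzExtensionConstant Y) * c * r := by ring
  · push Not at hx
    have hxs : x ∉ s := fun hxs => (hx x hxs).not_ge (by simpa using hr)
    rw [← hΦeq (.inr fun y hy => norm_sub_rev x y ▸ (hx y hy).le), indicator_of_notMem hxs,
      norm_zero]
    positivity

section NearIdentity

variable {Y : Type*} [NormedAddCommGroup Y] {s : Set Y} {φ : Y → Y} {x y : Y}

lemma norm_add_sub_add_le (h : IsSmallAtScaleOn c r s φ) (hx : x ∈ s) (hy : y ∈ s) :
    ‖x + φ x - (y + φ y)‖ ≤ (1 + c) * ‖x - y‖ := by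
  have := h.norm_sub_le x hx y hy
  rw [add_sub_add_comm]
  exact (norm_add_le _ _).trans (by linarith)

lemma le_norm_add_sub_add (h : IsSmallAtScaleOn c r s φ) (hx : x ∈ s) (hy : y ∈ s) :
    (1 - c) * ‖x - y‖ ≤ ‖x + φ x - (y + φ y)‖ := by
  have := norm_sub_le_norm_add (x - y) (φ x - φ y)
  rw [add_sub_add_comm]
  linarith [h.norm_sub_le x hx y hy]

lemma isHomeomorph_add [NormedSpace ℝ Y] [CompleteSpace Y] (h : IsSmallAtScaleOn c r univ φ)
    (hc : c < 1) : IsHomeomorph fun x => x + φ x := by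
  have happrox : ApproximatesLinearOn (fun x => x + φ x)
      (ContinuousLinearEquiv.refl ℝ Y : Y →L[ℝ] Y) univ c.toNNReal := fun x _ y _ => by
    calc ‖x + φ x - (y + φ y) - (x - y)‖ = ‖φ x - φ y‖ := by congr 1; abel
      _ ≤ c * ‖x - y‖ := h.norm_sub_le x (mem_univ _) y (mem_univ _)
      _ ≤ c.toNNReal * ‖x - y‖ := by gcongr; exact Real.le_coe_toNNReal c
  refine (happrox.toHomeomorph _ ?_).isHomeomorph
  rcases subsingleton_or_nontrivial Y with hY | hY
  · exact .inl hY
  · right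
    simpa [← NNReal.coe_lt_coe, Real.coe_toNNReal'] using hc

end NearIdentity

end IsSmallAtScaleOn

section CenterMass

variable {ι Y : Type*} [NormedAddCommGroup Y] [NormedSpace ℝ Y] {J : Finset ι} {w w' : ι → ℝ}
  {z z' : ι → Y} {β M : ℝ}

lemma norm_centerMass_le (hw : ∀ i ∈ J, 0 ≤ w i) (hw0 : 0 < ∑ i ∈ J, w i)
    (hz : ∀ i ∈ J, ‖z i‖ ≤ M) : ‖J.centerMass w z‖ ≤ M := by
  rw [← mem_closedBall_zero_iff]
  exact (convex_closedBall 0 M).centerMass_mem hw hw0 fun i hi =>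
    mem_closedBall_zero_iff.2 (hz i hi)

lemma centerMass_sub_right (J : Finset ι) (w : ι → ℝ) (z z' : ι → Y) :
    J.centerMass w (fun i => z i - z' i) = J.centerMass w z - J.centerMass w z' := by
  simp only [Finset.centerMass, smul_sub, Finset.sum_sub_distrib]

lemma centerMass_sub_const (hw : ∑ i ∈ J, w i ≠ 0) (z : ι → Y) (c : Y) :
    J.centerMass w (fun i => z i - c) = J.centerMass w z - c := by
  rw [centerMass_sub_right]
  exact congrArg _ (Finset.centerMass_const hw c)

-- The average of `z - c`, where `c` is the average with weights `w'`, does not change if `w` is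
-- replaced with `w - w'` in its numerator.
lemma norm_centerMass_sub_centerMass_le (hw' : ∀ i ∈ J, 0 ≤ w' i)
    (hw1 : 1 ≤ ∑ i ∈ J, w i) (hw'0 : 0 < ∑ i ∈ J, w' i) (hβ : 0 ≤ β)
    (hww' : ∀ i ∈ J, |w i - w' i| ≤ β) (hz : ∀ i ∈ J, ‖z i‖ ≤ M) :
    ‖J.centerMass w z - J.centerMass w' z‖ ≤ J.card * (β * (2 * M)) := by
  set c := J.centerMass w' z with hc
  have hw0 : 0 < ∑ i ∈ J, w i := by linarith
  have hcM : ‖c‖ ≤ M := norm_centerMass_le hw' hw'0 hz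
  have hzero : ∑ i ∈ J, w' i • (z i - c) = 0 := by
    have h := centerMass_sub_const hw'0.ne' z c
    rw [← hc, sub_self, Finset.centerMass, smul_eq_zero] at h
    exact h.resolve_left (inv_ne_zero hw'0.ne')
  have hsum : ∑ i ∈ J, w i • (z i - c) = ∑ i ∈ J, (w i - w' i) • (z i - c) := by
    simp only [sub_smul, Finset.sum_sub_distrib] at hzero ⊢
    rw [hzero, sub_zero]
  have hterm : ∀ i ∈ J, ‖(w i - w' i) • (z i - c)‖ ≤ β * (2 * M) := fun i hi => by
    rw [norm_smul, Real.norm_eq_abs]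
    exact mul_le_mul (hww' i hi) ((norm_sub_le _ _).trans (by linarith [hz i hi]))
      (norm_nonneg _) hβ
  have hbound : ‖∑ i ∈ J, (w i - w' i) • (z i - c)‖ ≤ J.card * (β * (2 * M)) := by
    simpa using norm_sum_le_of_le J hterm
  rw [← centerMass_sub_const hw0.ne', Finset.centerMass, hsum, norm_smul, norm_inv,
    Real.norm_of_nonneg hw0.le]
  calc _ ≤ 1 * ‖∑ i ∈ J, (w i - w' i) • (z i - c)‖ := by gcongr; exact inv_le_one_of_one_le₀ hw1
    _ ≤ J.card * (β * (2 * M)) := by rwa [one_mul]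

lemma IsSmallAtScaleOn.centerMass {X : Type*} [SeminormedAddCommGroup X] {a r : ℝ} {s : Set X}
    {w : X → ι → ℝ} {f : ι → X → Y} (ha : 0 ≤ a) (hr : 0 < r)
    (hw : ∀ x ∈ s, ∀ i ∈ J, 0 ≤ w x i) (hw1 : ∀ x ∈ s, 1 ≤ ∑ i ∈ J, w x i)
    (hwlip : ∀ x ∈ s, ∀ y ∈ s, ∀ i ∈ J, |w x i - w y i| ≤ ‖x - y‖ / r)
    (hf : ∀ i ∈ J, IsSmallAtScaleOn a r s (f i)) :
    IsSmallAtScaleOn ((1 + 2 * J.card) * a) r s (fun x => J.centerMass (w x) fun i => f i x) := by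
  have hw0 : ∀ x ∈ s, 0 < ∑ i ∈ J, w x i := fun x hx => one_pos.trans_le (hw1 x hx)
  refine ⟨fun x hx => ?_, fun x hx y hy => ?_⟩
  · calc _ ≤ a * r := norm_centerMass_le (hw x hx) (hw0 x hx) fun i hi => (hf i hi).norm_le x hx
      _ ≤ (1 + 2 * J.card) * a * r := by
        rw [mul_assoc]
        exact le_mul_of_one_le_left (by positivity) (le_add_of_nonneg_right (by positivity))
  · have hvalues : ‖J.centerMass (w x) (f · x) - J.centerMass (w x) (f · y)‖ ≤ a * ‖x - y‖ := by
      rw [← centerMass_sub_right]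
      exact norm_centerMass_le (hw x hx) (hw0 x hx) fun i hi => (hf i hi).norm_sub_le x hx y hy
    have hweights := norm_centerMass_sub_centerMass_le (z := (f · y)) (hw y hy) (hw1 x hx)
      (hw0 y hy) (by positivity) (hwlip x hx y hy) fun i hi => (hf i hi).norm_le y hy
    calc _ ≤ _ := norm_sub_le_norm_sub_add_norm_sub _ (J.centerMass (w x) (f · y)) _
      _ ≤ a * ‖x - y‖ + J.card * (‖x - y‖ / r * (2 * (a * r))) := add_le_add hvalues hweights
      _ = (1 + 2 * J.card) * a * ‖x - y‖ := by
        field_simp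

end CenterMass

section Net

/-- The weight of the point `c` at the point `x` in the partitions of unity at scale `r`. The slope
of this tent is `1 / r`, it is at least `1` up to the distance `7 * r`, and it vanishes beyond the
distance `8 * r`. -/
def tent {X : Type*} [Dist X] (r : ℝ) (x c : X) : ℝ := max 0 (8 - dist x c / r)

section tent

variable {X : Type*} [PseudoMetricSpace X] {r : ℝ} {x y c : X}

lemma tent_nonneg : 0 ≤ tent r x c := le_max_left _ _

lemma dist_lt_of_tent_ne_zero (hr : 0 < r) (h : tent r x c ≠ 0) : dist x c < 8 * r := by
  contrapose! h
  exact max_eq_left (sub_nonpos.2 ((le_div_iff₀ hr).2 h))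

lemma one_le_tent (hr : 0 < r) (h : dist x c ≤ 7 * r) : 1 ≤ tent r x c := by
  refine le_max_of_le_right ?_
  linarith [(div_le_iff₀ hr).2 h]

lemma abs_tent_sub_tent_le (hr : 0 < r) : |tent r x c - tent r y c| ≤ dist x y / r := by
  calc |tent r x c - tent r y c| ≤ |8 - dist x c / r - (8 - dist y c / r)| := by
        simpa [tent] using abs_max_sub_max_le_max 0 (8 - dist x c / r) 0 (8 - dist y c / r)
    _ = |dist x c - dist y c| / r := by
        rw [sub_sub_sub_cancel_left, ← sub_div, abs_div, abs_of_pos hr, abs_sub_comm]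
    _ ≤ dist x y / r := by
        gcongr
        exact abs_dist_sub_le x y c

end tent

lemma exists_finset_isSeparated_isCover_of_isCompact {X : Type*} [MetricSpace X] {s : Set X}
    (hs : IsCompact s) {q : ℝ} (hq : 0 < q) :
    ∃ J : Finset X, ↑J ⊆ s ∧ (∀ x ∈ J, ∀ y ∈ J, x ≠ y → q ≤ dist x y) ∧
      ∀ x ∈ s, ∃ y ∈ J, dist x y ≤ q := by
  lift q to NNReal using hq.le
  have hq' : q / 2 ≠ 0 := (half_pos (NNReal.coe_pos.1 hq)).ne'
  have hfin : packingNumber q s ≠ ⊤ := by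
    obtain ⟨N, -, hNfin, hN⟩ := exists_finite_isCover_of_isCompact hq' hs
    have h := packingNumber_two_mul_le_externalCoveringNumber (q / 2) s
    rw [mul_div_cancel₀ q two_ne_zero] at h
    exact (h.trans_lt (hN.externalCoveringNumber_le_encard.trans_lt hNfin.encard_lt_top)).ne
  have hJ : (maximalSeparatedSet q s).Finite := by
    rw [← encard_lt_top_iff, encard_maximalSeparatedSet hfin]
    exact hfin.lt_top
  refine ⟨hJ.toFinset, fun x hx => maximalSeparatedSet_subset (hJ.mem_toFinset.1 hx),
    fun x hx y hy hxy => ?_, fun x hx => ?_⟩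
  · have h := isSeparated_maximalSeparatedSet (hJ.mem_toFinset.1 hx) (hJ.mem_toFinset.1 hy) hxy
    beta_reduce at h
    rw [edist_nndist, ENNReal.coe_lt_coe] at h
    exact_mod_cast h.le
  · simpa using isCover_iff_subset_iUnion_closedBall.1 (isCover_maximalSeparatedSet hfin) hx

lemma card_le_of_separated_of_norm_sub_le {F : Type*} [NormedAddCommGroup F] [NormedSpace ℝ F]
    [FiniteDimensional ℝ F] {J : Finset F} {x : F} {q : ℝ} (hq : 0 < q)
    (hJx : ∀ c ∈ J, ‖c - x‖ ≤ 2 * q) (hJ : ∀ c ∈ J, ∀ d ∈ J, c ≠ d → q ≤ dist c d) :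
    J.card ≤ 5 ^ Module.finrank ℝ F := by
  classical
  have hinj : Function.Injective fun c : F => q⁻¹ • (c - x) := fun c d hcd => by
    simpa [hq.ne'] using hcd
  rw [← Finset.card_image_of_injective J hinj]
  refine Besicovitch.card_le_of_separated _ ?_ ?_
  · simp only [Finset.mem_image]
    rintro _ ⟨c, hc, rfl⟩
    rw [norm_smul, norm_inv, Real.norm_of_nonneg hq.le, inv_mul_le_iff₀ hq, mul_comm]
    exact hJx c hc
  · simp only [Finset.mem_image]
    rintro _ ⟨c, hc, rfl⟩ _ ⟨d, hd, rfl⟩ hne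
    rw [← smul_sub, sub_sub_sub_cancel_right, norm_smul, norm_inv, Real.norm_of_nonneg hq.le,
      le_inv_mul_iff₀ hq, mul_one, ← dist_eq_norm]
    exact hJ c hc d hd fun hcd => hne (by rw [hcd])

lemma exists_finset_tent {F : Type*} [NormedAddCommGroup F] [NormedSpace ℝ F]
    [FiniteDimensional ℝ F] {s : Set F} (hs : IsCompact s) {r : ℝ} (hr : 0 < r) :
    ∃ J : Finset F, ↑J ⊆ s ∧ ∀ x ∈ s, ∃ J' ⊆ J, J'.card ≤ 5 ^ Module.finrank ℝ F ∧
      (∀ j ∈ J', ‖j - x‖ ≤ 10 * r) ∧ ∀ y ∈ closedBall x (2 * r),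
        (∀ j ∈ J, j ∉ J' → tent r y j = 0) ∧ 1 ≤ ∑ j ∈ J', tent r y j := by
  classical
  obtain ⟨J, hJs, hJsep, hJcov⟩ :=
    exists_finset_isSeparated_isCover_of_isCompact hs (q := 5 * r) (by positivity)
  refine ⟨J, hJs, fun x hx => ⟨{j ∈ J | ‖j - x‖ ≤ 10 * r}, Finset.filter_subset _ _, ?_,
    fun j hj => (Finset.mem_filter.1 hj).2, fun y hy => ⟨fun j hj hjx => ?_, ?_⟩⟩⟩
  · exact card_le_of_separated_of_norm_sub_le (q := 5 * r) (x := x) (by positivity)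
      (fun j hj => (Finset.mem_filter.1 hj).2.trans (by linarith))
      fun i hi j hj => hJsep i (Finset.mem_of_mem_filter i hi) j (Finset.mem_of_mem_filter j hj)
  · by_contra hne
    have hyj := dist_lt_of_tent_ne_zero hr hne
    refine hjx (Finset.mem_filter.2 ⟨hj, ?_⟩)
    rw [← dist_eq_norm]
    linarith [dist_triangle_left j x y, mem_closedBall.1 hy]
  · obtain ⟨j, hj, hxj⟩ := hJcov x hx
    have hjx : ‖j - x‖ ≤ 10 * r := by
      rw [← dist_eq_norm, dist_comm]
      linarith
    refine (one_le_tent hr ?_).trans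
      (Finset.single_le_sum (fun _ _ => tent_nonneg) (Finset.mem_filter.2 ⟨hj, hjx⟩))
    linarith [dist_triangle y x j, mem_closedBall.1 hy]

end Net

section Projection

variable {F : Type*} [NormedAddCommGroup F] [InnerProductSpace ℝ F]

/-- The orthogonal projection onto the affine plane of direction `K` through `x`. Unlike
`EuclideanGeometry.orthogonalProjection`, it takes its values in the whole space. -/
def planeProj (K : Submodule ℝ F) [K.HasOrthogonalProjection] (x y : F) : F :=
  x + K.starProjection (y - x)

variable (K K' : Submodule ℝ F) [K.HasOrthogonalProjection] [K'.HasOrthogonalProjection]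

lemma planeProj_sub_planeProj_same (x y y' : F) :
    planeProj K x y - planeProj K x y' = K.starProjection (y - y') := by
  rw [planeProj, planeProj, add_sub_add_left_eq_sub, ← map_sub, sub_sub_sub_cancel_right]

lemma self_sub_planeProj (x y : F) : y - planeProj K x y = Kᗮ.starProjection (y - x) := by
  rw [planeProj, ← sub_sub, Submodule.starProjection_orthogonal_val]

lemma planeProj_sub_planeProj (x x' y : F) :
    planeProj K' x' y - planeProj K x y =
      (K'.starProjection (y - x') - K.starProjection (y - x')) + Kᗮ.starProjection (x' - x) := by
  simp only [planeProj, Submodule.starProjection_orthogonal_val, map_sub]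
  abel

lemma orthogonal_starProjection_sub_starProjection (w v : F) :
    Kᗮ.starProjection (w - K.starProjection v) = Kᗮ.starProjection w := by
  rw [map_sub, Submodule.starProjection_orthogonal_apply_eq_zero (K.starProjection_apply_mem v),
    sub_zero]

end Projection

section Flatness

variable {F : Type*} [NormedAddCommGroup F] [InnerProductSpace ℝ F] [FiniteDimensional ℝ F]
  {E : Set F} {D : F → Submodule ℝ F} {δ r : ℝ}

/-- The directions `D x` and `D' x'` attached to points of `E` at distance at most `10 * r` are
`δ`-close. As everywhere below, only the part of `E` of norm at most `4` is considered. -/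
def IsTiltLE (E : Set F) (D D' : F → Submodule ℝ F) (δ r : ℝ) : Prop :=
  ∀ x ∈ E, ‖x‖ ≤ 4 → ∀ x' ∈ E, ‖x'‖ ≤ 4 → ‖x - x'‖ ≤ 10 * r → ∀ w,
    ‖(D x).starProjection w - (D' x').starProjection w‖ ≤ δ * ‖w‖

/-- `E` is `δ * r`-close, in the balls of radius `100 * r` centred on `E`, to the planes through
their centres of direction `D`, and these directions vary slowly. -/
structure IsFlatAtScale (E : Set F) (D : F → Submodule ℝ F) (δ r : ℝ) : Prop where
  normal_le : ∀ x ∈ E, ‖x‖ ≤ 4 → ∀ y ∈ E, ‖y - x‖ < 100 * r →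
    ‖(D x)ᗮ.starProjection (y - x)‖ ≤ δ * r
  exists_near : ∀ x ∈ E, ‖x‖ ≤ 4 → ∀ v ∈ D x, ‖v‖ < 100 * r → ∃ y ∈ E, ‖x + v - y‖ ≤ δ * r
  tilt_le : IsTiltLE E D D δ r

lemma IsFlatAtScale.mono {δ' : ℝ} (h : IsFlatAtScale E D δ r) (hδ : δ ≤ δ') (hr : 0 ≤ r) :
    IsFlatAtScale E D δ' r where
  normal_le x hx hx4 y hy hyx := (h.normal_le x hx hx4 y hy hyx).trans (by gcongr)
  exists_near x hx hx4 v hv hvr :=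
    (h.exists_near x hx hx4 v hv hvr).imp fun _ hy => ⟨hy.1, hy.2.trans (by gcongr)⟩
  tilt_le x hx hx4 x' hx' hx'4 hxx' w := (h.tilt_le x hx hx4 x' hx' hx'4 hxx' w).trans (by gcongr)

/-- On `s`, and near each point `x` of `E`, the map `S` is an `a`-small perturbation at scale `r` of
the projection onto the plane through `x` of direction `D x`. -/
def IsNearProjectionOn (E : Set F) (D : F → Submodule ℝ F) (a r : ℝ) (s : Set F) (S : F → F) :
    Prop :=
  ∀ x ∈ E, ‖x‖ ≤ 4 →
    IsSmallAtScaleOn a r (s ∩ closedBall x (2 * r)) fun y => S y - planeProj (D x) x y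

lemma IsFlatAtScale.isSmallAtScaleOn_planeProj_sub (h : IsFlatAtScale E D δ r) (hδ : 0 ≤ δ)
    (hr : 0 < r) {x x' : F} (hx : x ∈ E) (hx4 : ‖x‖ ≤ 4) (hx' : x' ∈ E) (hx'4 : ‖x'‖ ≤ 4)
    (hxx' : ‖x' - x‖ ≤ 10 * r) :
    IsSmallAtScaleOn (13 * δ) r (closedBall x (2 * r))
      fun y => planeProj (D x') x' y - planeProj (D x) x y := by
  have htilt := h.tilt_le x' hx' hx'4 x hx hx4 hxx'
  refine ⟨fun y hy => ?_, fun y _ y' _ => ?_⟩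
  · have hyx' : ‖y - x'‖ ≤ 12 * r := by
      have := norm_sub_le_norm_sub_add_norm_sub y x x'
      rw [norm_sub_rev x x'] at this
      linarith [mem_closedBall_iff_norm.1 hy]
    rw [planeProj_sub_planeProj]
    calc _ ≤ δ * ‖y - x'‖ + δ * r :=
          (norm_add_le _ _).trans (add_le_add (htilt _) (h.normal_le x hx hx4 x' hx' (by linarith)))
      _ ≤ δ * (12 * r) + δ * r := by gcongr
      _ = 13 * δ * r := by ring
  · rw [sub_sub_sub_comm, planeProj_sub_planeProj_same, planeProj_sub_planeProj_same]
    exact (htilt _).trans (by gcongr; linarith)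

/-- The loss in the accuracy of the approximating planes when the projections onto them are glued:
each point is covered by at most `5 ^ finrank` of the tents used in the partition of unity. -/
def glueConst (F : Type*) [NormedAddCommGroup F] [InnerProductSpace ℝ F] : ℝ :=
  (1 + 2 * 5 ^ Module.finrank ℝ F) * 13

lemma one_le_glueConst (F : Type*) [NormedAddCommGroup F] [InnerProductSpace ℝ F] :
    1 ≤ glueConst F := by
  have : (0 : ℝ) < 5 ^ Module.finrank ℝ F := by positivity
  unfold glueConst
  linarith

lemma IsFlatAtScale.exists_isNearProjectionOn (h : IsFlatAtScale E D δ r) (hE : IsClosed E)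
    (hδ : 0 ≤ δ) (hr : 0 < r) :
    ∃ S : F → F, IsNearProjectionOn E D (glueConst F * δ) r univ S := by
  obtain ⟨J, hJE, hJ⟩ := exists_finset_tent ((isCompact_closedBall (0 : F) 4).inter_left hE) hr
  refine ⟨fun y => J.centerMass (tent r y) fun j => planeProj (D j) j y, fun x hx hx4 => ?_⟩
  rw [univ_inter]
  obtain ⟨J', hJ'J, hJ'card, hJ'x, htent⟩ := hJ x ⟨hx, mem_closedBall_zero_iff.2 hx4⟩
  have hclose : ∀ j ∈ J', IsSmallAtScaleOn (13 * δ) r (closedBall x (2 * r))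
      fun y => planeProj (D j) j y - planeProj (D x) x y := fun j hj =>
    have hjE := hJE (hJ'J hj)
    h.isSmallAtScaleOn_planeProj_sub hδ hr hx hx4 hjE.1 (mem_closedBall_zero_iff.1 hjE.2)
      (hJ'x j hj)
  have hsmall := IsSmallAtScaleOn.centerMass (w := tent r)
    (by positivity) hr (fun _ _ _ _ => tent_nonneg) (fun y hy => (htent y hy).2)
    (fun y _ y' _ j _ => dist_eq_norm y y' ▸ abs_tent_sub_tent_le hr) hclose
  refine (hsmall.mono ?_ hr.le).congr fun y hy => ?_
  · rw [glueConst, mul_assoc]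
    gcongr
    exact_mod_cast hJ'card
  · beta_reduce
    rw [centerMass_sub_const (by linarith [(htent y hy).2]),
      Finset.centerMass_subset _ hJ'J (htent y hy).1]

end Flatness

section Approximation

variable {F : Type*} [NormedAddCommGroup F] [InnerProductSpace ℝ F] [FiniteDimensional ℝ F]
  {E T : Set F} {D D' : F → Submodule ℝ F} {δ κ r R η : ℝ} {S φ : F → F}

/-- The ranges of the accuracy `κ`, the scale `r` and the radius `R` in the construction. They
ensure that all the points of `E` used in it have norm at most `4`. -/
structure IsAdmissible (κ r R : ℝ) : Prop where
  accuracy_nonneg : 0 ≤ κ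
  accuracy_le : κ ≤ 1 / 100
  scale_pos : 0 < r
  scale_le : r ≤ 1 / 10
  radius_le : R ≤ 3

lemma IsAdmissible.accuracy_mul_scale_le (h : IsAdmissible κ r R) : κ * r ≤ r / 100 := by
  have := mul_le_mul_of_nonneg_right h.accuracy_le h.scale_pos.le
  linarith

lemma IsAdmissible.half (h : IsAdmissible κ r R) : IsAdmissible κ (r / 2) (R - 5 * r) :=
  have hr := h.scale_pos
  ⟨h.accuracy_nonneg, h.accuracy_le, half_pos hr, by linarith [h.scale_le],
    by linarith [h.radius_le]⟩

/-- In the ball of radius `R`, the closed set `T` approximates `E` at scale `r`: it stays close to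
`E`, it is at scale `r` almost a graph over the planes of direction `D` (`normal_le`), and this
graph has no holes, since one can walk on it in all the directions of these planes
(`exists_step`). -/
structure IsApproxAtScale (E : Set F) (D : F → Submodule ℝ F) (κ r R : ℝ) (T : Set F) : Prop
    extends IsAdmissible κ r R where
  isClosed : IsClosed T
  exists_near : ∀ y ∈ T, ‖y‖ ≤ R → ∃ x ∈ E, ‖y - x‖ ≤ κ * r
  normal_le : ∀ y ∈ T, ‖y‖ ≤ R → ∀ y' ∈ T, ‖y'‖ ≤ R → ‖y - y'‖ ≤ r → ∀ x ∈ E, ‖x - y‖ ≤ r →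
    ‖(D x)ᗮ.starProjection (y - y')‖ ≤ κ * ‖y - y'‖
  exists_step : ∀ y ∈ T, ‖y‖ ≤ R → ∀ x ∈ E, ‖x - y‖ ≤ r → ∀ v ∈ D x, ‖v‖ ≤ r / 2 →
    ∃ z ∈ T, ‖z - y - v‖ ≤ ‖v‖ / 2

namespace IsApproxAtScale

lemma exists_near_norm_le (h : IsApproxAtScale E D κ r R T) {y : F} (hy : y ∈ T) (hyR : ‖y‖ ≤ R) :
    ∃ x ∈ E, ‖x‖ ≤ 4 ∧ ‖y - x‖ ≤ κ * r := by
  obtain ⟨x, hx, hyx⟩ := h.exists_near y hy hyR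
  refine ⟨x, hx, ?_, hyx⟩
  have := norm_le_norm_add_norm_sub y x
  linarith [h.accuracy_mul_scale_le, h.scale_le, h.radius_le]

lemma norm_sub_le_norm_starProjection (h : IsApproxAtScale E D κ r R T) {x y z : F} (hy : y ∈ T)
    (hyR : ‖y‖ ≤ R) (hz : z ∈ T) (hzR : ‖z‖ ≤ R) (hzy : ‖z - y‖ ≤ r) (hx : x ∈ E)
    (hxy : ‖y - x‖ ≤ r) : ‖z - y‖ ≤ 6 / 5 * ‖(D x).starProjection (z - y)‖ := by
  have hnormal := h.normal_le y hy hyR z hz hzR (by rwa [norm_sub_rev]) x hx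
    (by rwa [norm_sub_rev])
  rw [← norm_neg, ← map_neg, neg_sub, norm_sub_rev y z] at hnormal
  have hsum := norm_add_le ((D x).starProjection (z - y)) ((D x)ᗮ.starProjection (z - y))
  rw [Submodule.starProjection_add_starProjection_orthogonal] at hsum
  have := mul_le_mul_of_nonneg_right h.accuracy_le (norm_nonneg (z - y))
  linarith [norm_nonneg (z - y)]

lemma exists_norm_starProjection_sub_le_half (h : IsApproxAtScale E D κ r R T) {x y z w : F}
    (hz : z ∈ T) (hzR : ‖z‖ ≤ R) (hx : x ∈ E) (hxz : ‖x - z‖ ≤ r) (hw : w ∈ D x)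
    (hwr : ‖(D x).starProjection (z - y) - w‖ ≤ r / 2) :
    ∃ z' ∈ T, ‖z' - z‖ ≤ 3 / 2 * ‖(D x).starProjection (z - y) - w‖ ∧
      ‖(D x).starProjection (z' - y) - w‖ ≤ ‖(D x).starProjection (z - y) - w‖ / 2 := by
  set u := w - (D x).starProjection (z - y) with hu
  have huD : u ∈ D x := (D x).sub_mem hw ((D x).starProjection_apply_mem _)
  rw [norm_sub_rev, ← hu] at hwr ⊢
  obtain ⟨z', hz', hz'u⟩ := h.exists_step z hz hzR x hx hxz u huD hwr
  refine ⟨z', hz', ?_, ?_⟩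
  · linarith [norm_le_norm_add_norm_sub u (z' - z), norm_sub_rev u (z' - z)]
  · have huu : (D x).starProjection u = u := Submodule.starProjection_eq_self_iff.2 huD
    have heq : (D x).starProjection (z' - y) - w = (D x).starProjection (z' - z - u) := by
      rw [map_sub _ (z' - z), huu, hu, ← sub_add_sub_cancel z' z y, map_add]
      abel
    rw [heq]
    exact ((D x).norm_starProjection_apply_le _).trans hz'u

-- A point of `T` near `y` whose projection is as close as possible to `y + w` cannot be improved by
-- `exists_norm_starProjection_sub_le_half`, so its projection is `y + w`.
lemma exists_starProjection_eq (h : IsApproxAtScale E D κ r R T) {x y w : F} {s : ℝ} (hy : y ∈ T)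
    (hyR : ‖y‖ ≤ R - r) (hx : x ∈ E) (hxy : ‖y - x‖ ≤ r / 4) (hw : w ∈ D x) (hws : ‖w‖ ≤ s)
    (hs : s ≤ r / 4) :
    ∃ z ∈ T, ‖z‖ ≤ R ∧ ‖z - y‖ ≤ 3 * s ∧ (D x).starProjection (z - y) = w := by
  have hr := h.scale_pos
  have hyK : y ∈ T ∩ closedBall y (4 * s) :=
    ⟨hy, mem_closedBall_self (by linarith [norm_nonneg w])⟩
  have hcpt : IsCompact (T ∩ closedBall y (4 * s)) :=
    (isCompact_closedBall _ _).inter_left h.isClosed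
  obtain ⟨z, ⟨hz, hzy⟩, hmin⟩ := hcpt.exists_isMinOn
    (f := fun z => ‖(D x).starProjection (z - y) - w‖) ⟨y, hyK⟩ (by fun_prop)
  rw [mem_closedBall_iff_norm] at hzy
  have hzR : ‖z‖ ≤ R := by linarith [norm_le_norm_add_norm_sub' z y]
  have hdefect : ‖(D x).starProjection (z - y) - w‖ ≤ s := by
    have hle : ‖(D x).starProjection (z - y) - w‖ ≤ ‖(D x).starProjection (y - y) - w‖ := hmin hyK
    rw [sub_self, map_zero, zero_sub, norm_neg] at hle
    exact hle.trans hws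
  have hzy3 : ‖z - y‖ ≤ 12 / 5 * s := by
    have := h.norm_sub_le_norm_starProjection hy (by linarith) hz hzR (by linarith) hx
      (by linarith)
    linarith [norm_le_norm_add_norm_sub' ((D x).starProjection (z - y)) w]
  refine ⟨z, hz, hzR, by linarith [norm_nonneg w], ?_⟩
  have hxz : ‖x - z‖ ≤ r := by
    linarith [norm_sub_le_norm_sub_add_norm_sub x y z, norm_sub_rev x y, norm_sub_rev y z]
  obtain ⟨z', hz', hz'z, hz'w⟩ := h.exists_norm_starProjection_sub_le_half (y := y) hz hzR hx hxz hw
    (by linarith)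
  have hz'y : z' ∈ closedBall y (4 * s) := by
    rw [mem_closedBall_iff_norm]
    linarith [norm_sub_le_norm_sub_add_norm_sub z' z y]
  have hle : ‖(D x).starProjection (z - y) - w‖ ≤ ‖(D x).starProjection (z' - y) - w‖ :=
    hmin ⟨hz', hz'y⟩
  exact sub_eq_zero.1 (norm_le_zero_iff.1 (by linarith))

lemma norm_sub_self_le (h : IsApproxAtScale E D κ r R T)
    (hS : IsNearProjectionOn E D (κ / 4) r (T ∩ closedBall 0 R) S) {y : F} (hy : y ∈ T)
    (hyR : ‖y‖ ≤ R) : ‖S y - y‖ ≤ 2 * κ * r := by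
  obtain ⟨x, hx, hx4, hyx⟩ := h.exists_near_norm_le hy hyR
  have hyx2 : y ∈ closedBall x (2 * r) := by
    rw [mem_closedBall_iff_norm]
    linarith [h.accuracy_mul_scale_le, h.scale_pos]
  have hSy : ‖S y - planeProj (D x) x y‖ ≤ κ / 4 * r :=
    (hS x hx hx4).norm_le y ⟨⟨hy, mem_closedBall_zero_iff.2 hyR⟩, hyx2⟩
  have hy_proj : ‖y - planeProj (D x) x y‖ ≤ κ * r := by
    rw [self_sub_planeProj]
    exact ((D x)ᗮ.norm_starProjection_apply_le _).trans hyx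
  have hκr := mul_nonneg h.accuracy_nonneg h.scale_pos.le
  rw [← sub_sub_sub_cancel_right _ _ (planeProj (D x) x y)]
  exact (norm_sub_le _ _).trans (by linarith)

lemma isSmallAtScaleOn_sub_self (h : IsApproxAtScale E D κ r R T)
    (hS : IsNearProjectionOn E D (κ / 4) r (T ∩ closedBall 0 R) S) :
    IsSmallAtScaleOn (4 * κ) r (T ∩ closedBall 0 R) fun y => S y - y := by
  have hκ := h.accuracy_nonneg
  have hr := h.scale_pos
  have hκr := h.accuracy_mul_scale_le
  refine ⟨fun y hy => ?_, fun y hy y' hy' => ?_⟩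
  · exact (h.norm_sub_self_le hS hy.1 (mem_closedBall_zero_iff.1 hy.2)).trans (by gcongr; norm_num)
  have hyR := mem_closedBall_zero_iff.1 hy.2
  have hy'R := mem_closedBall_zero_iff.1 hy'.2
  rcases le_total ‖y - y'‖ r with hle | hle
  · obtain ⟨x, hx, hx4, hyx⟩ := h.exists_near_norm_le hy.1 hyR
    have hy'x : ‖y' - x‖ ≤ 2 * r := by
      linarith [norm_sub_le_norm_sub_add_norm_sub y' y x, norm_sub_rev y y']
    have hSyy' := (hS x hx hx4).norm_sub_le y
      ⟨hy, mem_closedBall_iff_norm.2 (by linarith)⟩ y' ⟨hy', mem_closedBall_iff_norm.2 hy'x⟩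
    have hnormal := h.normal_le y hy.1 hyR y' hy'.1 hy'R hle x hx
      (by rw [norm_sub_rev]; linarith)
    have heq : S y - y - (S y' - y') = S y - planeProj (D x) x y - (S y' - planeProj (D x) x y') -
        (D x)ᗮ.starProjection (y - y') := by
      rw [← sub_sub_sub_cancel_right y y' x, map_sub, ← self_sub_planeProj, ← self_sub_planeProj]
      abel
    have hκy := mul_nonneg hκ (norm_nonneg (y - y'))
    rw [heq]
    exact (norm_sub_le _ _).trans (by linarith)
  · calc _ ≤ 2 * κ * r + 2 * κ * r := (norm_sub_le _ _).trans
          (add_le_add (h.norm_sub_self_le hS hy.1 hyR) (h.norm_sub_self_le hS hy'.1 hy'R))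
      _ = 4 * κ * r := by ring
      _ ≤ 4 * κ * ‖y - y'‖ := by gcongr

lemma exists_near_of_norm_add_le (h : IsApproxAtScale E D κ r R T)
    (hφ : IsSmallAtScaleOn (1 / 100) r univ φ) (htilt : IsTiltLE E D D' δ r) {y : F} (hy : y ∈ T)
    (hyR : ‖y + φ y‖ ≤ R - 5 * r) :
    ‖y‖ ≤ R - r ∧ ∃ x ∈ E, ‖x‖ ≤ 4 ∧ ‖y - x‖ ≤ r / 100 ∧
      ∀ x' ∈ E, ‖x' - (y + φ y)‖ ≤ r / 2 → ∀ w,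
        ‖(D x).starProjection w - (D' x').starProjection w‖ ≤ δ * ‖w‖ := by
  have hr := h.scale_pos
  have hφy := hφ.norm_le y (mem_univ y)
  have hyR' : ‖y‖ ≤ R - r := by linarith [norm_le_add_norm_add y (φ y)]
  obtain ⟨x, hx, hx4, hyx⟩ := h.exists_near_norm_le hy (by linarith)
  have hyx' := hyx.trans h.accuracy_mul_scale_le
  refine ⟨hyR', x, hx, hx4, hyx', fun x' hx' hx'y => htilt x hx hx4 x' hx' ?_ ?_⟩
  · linarith [norm_le_norm_add_norm_sub' x' (y + φ y), h.radius_le]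
  · have hyy : ‖y - (y + φ y)‖ = ‖φ y‖ := by rw [sub_add_cancel_left, norm_neg]
    linarith [norm_sub_le_norm_sub_add_norm_sub x y x', norm_sub_rev x y,
      norm_sub_le_norm_sub_add_norm_sub y (y + φ y) x', norm_sub_rev x' (y + φ y)]

lemma exists_near_image_add (h : IsApproxAtScale E D κ r R T)
    (hφ : IsSmallAtScaleOn (1 / 100) r univ φ)
    (hφS : IsNearProjectionOn E D (κ / 4) r (T ∩ closedBall 0 R) fun y => y + φ y)
    (hflat : IsFlatAtScale E D (κ / 4) r) {y : F} (hy : y ∈ T) (hyR : ‖y + φ y‖ ≤ R - 5 * r) :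
    ∃ x ∈ E, ‖y + φ y - x‖ ≤ κ * (r / 2) := by
  have hr := h.scale_pos
  obtain ⟨hyR', x, hx, hx4, hyx, -⟩ := h.exists_near_of_norm_add_le hφ hflat.tilt_le hy hyR
  have hSy := (hφS x hx hx4).norm_le y
    ⟨⟨hy, mem_closedBall_zero_iff.2 (by linarith)⟩, mem_closedBall_iff_norm.2 (by linarith)⟩
  obtain ⟨e, he, hxe⟩ := hflat.exists_near x hx hx4 _ ((D x).starProjection_apply_mem (y - x))
    (((D x).norm_starProjection_apply_le _).trans_lt (by linarith))
  refine ⟨e, he, ?_⟩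
  calc _ ≤ κ / 4 * r + κ / 4 * r :=
        (norm_sub_le_norm_sub_add_norm_sub _ (planeProj (D x) x y) _).trans (add_le_add hSy hxe)
    _ = κ * (r / 2) := by ring

lemma norm_orthogonal_starProjection_image_add_le (h : IsApproxAtScale E D κ r R T)
    (hφ : IsSmallAtScaleOn (1 / 100) r univ φ)
    (hφS : IsNearProjectionOn E D (κ / 4) r (T ∩ closedBall 0 R) fun y => y + φ y)
    (htilt : IsTiltLE E D D' (κ / 4) r) {x' y y' : F} (hy : y ∈ T)
    (hyR : ‖y + φ y‖ ≤ R - 5 * r) (hy' : y' ∈ T) (hy'R : ‖y' + φ y'‖ ≤ R - 5 * r)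
    (hyy' : ‖y + φ y - (y' + φ y')‖ ≤ r / 2) (hx' : x' ∈ E) (hx'y : ‖x' - (y + φ y)‖ ≤ r / 2) :
    ‖(D' x')ᗮ.starProjection (y + φ y - (y' + φ y'))‖ ≤ κ * ‖y + φ y - (y' + φ y')‖ := by
  have hr := h.scale_pos
  have hκ := h.accuracy_nonneg
  obtain ⟨hyR, x, hx, hx4, hyx, htilt_x⟩ := h.exists_near_of_norm_add_le hφ htilt hy hyR
  obtain ⟨hy'R, -⟩ := h.exists_near_of_norm_add_le hφ htilt hy' hy'R
  have hexp := hφ.le_norm_add_sub_add (mem_univ y) (mem_univ y')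
  have hy'x : ‖y' - x‖ ≤ 2 * r := by
    linarith [norm_sub_le_norm_sub_add_norm_sub y' y x, norm_sub_rev y y']
  have hproj := (hφS x hx hx4).norm_sub_le y
    ⟨⟨hy, mem_closedBall_zero_iff.2 (by linarith)⟩, mem_closedBall_iff_norm.2 (by linarith)⟩ y'
    ⟨⟨hy', mem_closedBall_zero_iff.2 (by linarith)⟩, mem_closedBall_iff_norm.2 hy'x⟩
  set u := y + φ y - (y' + φ y')
  rw [sub_sub_sub_comm, planeProj_sub_planeProj_same] at hproj
  have hnormal : ‖(D x)ᗮ.starProjection u‖ ≤ κ / 4 * ‖y - y'‖ := by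
    rw [← orthogonal_starProjection_sub_starProjection (D x) u (y - y')]
    exact ((D x)ᗮ.norm_starProjection_apply_le _).trans hproj
  have htilt_u : ‖(D' x')ᗮ.starProjection u - (D x)ᗮ.starProjection u‖ ≤ κ / 4 * ‖u‖ := by
    rw [Submodule.starProjection_orthogonal_val, Submodule.starProjection_orthogonal_val,
      sub_sub_sub_cancel_left]
    exact htilt_x x' hx' hx'y u
  calc _ ≤ _ := norm_le_norm_add_norm_sub' _ ((D x)ᗮ.starProjection u)
    _ ≤ κ / 4 * ‖y - y'‖ + κ / 4 * ‖u‖ := add_le_add hnormal htilt_u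
    _ ≤ κ / 4 * (2 * ‖u‖) + κ / 4 * ‖u‖ := by gcongr; linarith [norm_nonneg (y - y')]
    _ ≤ κ * ‖u‖ := by linarith [mul_nonneg hκ (norm_nonneg u)]

lemma exists_step_image_add (h : IsApproxAtScale E D κ r R T)
    (hφ : IsSmallAtScaleOn (1 / 100) r univ φ)
    (hφS : IsNearProjectionOn E D (κ / 4) r (T ∩ closedBall 0 R) fun y => y + φ y)
    (htilt : IsTiltLE E D D' (κ / 4) r) {x' y v : F} (hy : y ∈ T) (hyR : ‖y + φ y‖ ≤ R - 5 * r)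
    (hx' : x' ∈ E) (hx'y : ‖x' - (y + φ y)‖ ≤ r / 2) (hv : v ∈ D' x') (hvr : ‖v‖ ≤ r / 4) :
    ∃ z ∈ T, ‖z + φ z - (y + φ y) - v‖ ≤ ‖v‖ / 2 := by
  have hr := h.scale_pos
  have hκ := h.accuracy_nonneg
  obtain ⟨hyR, x, hx, hx4, hyx, htilt⟩ := h.exists_near_of_norm_add_le hφ htilt hy hyR
  have htilt_v : ‖(D x).starProjection v - v‖ ≤ κ / 4 * ‖v‖ := by
    simpa only [Submodule.starProjection_eq_self_iff.2 hv] using htilt x' hx' hx'y v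
  obtain ⟨z, hz, hzR, hzy, hzv⟩ := h.exists_starProjection_eq hy hyR hx (by linarith)
    ((D x).starProjection_apply_mem v) ((D x).norm_starProjection_apply_le v) hvr
  have hzx : ‖z - x‖ ≤ 2 * r := by linarith [norm_sub_le_norm_sub_add_norm_sub z y x]
  have hproj := (hφS x hx hx4).norm_sub_le z
    ⟨⟨hz, mem_closedBall_zero_iff.2 hzR⟩, mem_closedBall_iff_norm.2 hzx⟩ y
    ⟨⟨hy, mem_closedBall_zero_iff.2 (by linarith)⟩, mem_closedBall_iff_norm.2 (by linarith)⟩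
  rw [sub_sub_sub_comm, planeProj_sub_planeProj_same, hzv] at hproj
  refine ⟨z, hz, ?_⟩
  calc _ ≤ κ / 4 * ‖z - y‖ + κ / 4 * ‖v‖ :=
        (norm_sub_le_norm_sub_add_norm_sub _ ((D x).starProjection v) _).trans
          (add_le_add hproj htilt_v)
    _ ≤ κ / 4 * (3 * ‖v‖) + κ / 4 * ‖v‖ := by gcongr
    _ = κ * ‖v‖ := by ring
    _ ≤ 1 / 2 * ‖v‖ := by gcongr; linarith [h.accuracy_le]
    _ = ‖v‖ / 2 := by ring

lemma image_add (h : IsApproxAtScale E D κ r R T) (hφ : IsSmallAtScaleOn (1 / 100) r univ φ)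
    (hφS : IsNearProjectionOn E D (κ / 4) r (T ∩ closedBall 0 R) fun y => y + φ y)
    (hflat : IsFlatAtScale E D (κ / 4) r) (htilt : IsTiltLE E D D' (κ / 4) r) :
    IsApproxAtScale E D' κ (r / 2) (R - 5 * r) ((fun x => x + φ x) '' T) where
  toIsAdmissible := h.toIsAdmissible.half
  isClosed := (hφ.isHomeomorph_add (by norm_num)).isClosedMap T h.isClosed
  exists_near := by
    rintro _ ⟨y, hy, rfl⟩ hyR
    exact h.exists_near_image_add hφ hφS hflat hy hyR
  normal_le := by
    rintro _ ⟨y, hy, rfl⟩ hyR _ ⟨y', hy', rfl⟩ hy'R hyy' x' hx' hx'y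
    exact h.norm_orthogonal_starProjection_image_add_le hφ hφS htilt hy hyR hy' hy'R hyy' hx' hx'y
  exists_step := by
    rintro _ ⟨y, hy, rfl⟩ hyR x' hx' hx'y v hv hvr
    obtain ⟨z, hz, hzv⟩ := h.exists_step_image_add hφ hφS htilt hy hyR hx' hx'y hv (by linarith)
    exact ⟨_, ⟨z, hz, rfl⟩, hzv⟩

lemma exists_perturbation (h : IsApproxAtScale E D κ r R T) (hE : IsClosed E)
    (hflat : IsFlatAtScale E D δ r) (htilt : IsTiltLE E D D' (κ / 4) r) (hδ : 0 ≤ δ)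
    (hδκ : glueConst F * δ ≤ κ / 4) (hκη : (1 + lipschitzExtensionConstant F) * (4 * κ) ≤ η)
    (hη : η ≤ 1 / 100) :
    ∃ φ : F → F, IsSmallAtScaleOn η r univ φ ∧
      IsApproxAtScale E D' κ (r / 2) (R - 5 * r) ((fun x => x + φ x) '' T) := by
  have hr := h.scale_pos
  have hδκ' : δ ≤ κ / 4 := (le_mul_of_one_le_left hδ (one_le_glueConst F)).trans hδκ
  obtain ⟨S, hS⟩ := hflat.exists_isNearProjectionOn hE hδ hr
  have hST : IsNearProjectionOn E D (κ / 4) r (T ∩ closedBall 0 R) S := fun x hx hx4 =>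
    ((hS x hx hx4).mono hδκ hr.le).subset (inter_subset_inter_left _ (subset_univ _))
  obtain ⟨φ, hφ, hφsmall⟩ := (h.isSmallAtScaleOn_sub_self hST).exists_extension
    (mul_nonneg four_pos.le h.accuracy_nonneg) hr.le
  have hφη := hφsmall.mono hκη hr.le
  refine ⟨φ, hφη, h.image_add (hφη.mono hη hr.le) (fun x hx hx4 => (hST x hx hx4).congr
    fun y hy => ?_) (hflat.mono hδκ' hr.le) htilt⟩
  beta_reduce
  rw [← hφ hy.1, add_sub_cancel]

lemma exists_close_of_exists_close (h : IsApproxAtScale E D κ r R T)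
    (hflat : IsFlatAtScale E D δ r) (hδκ : δ ≤ κ) (hR : 2 ≤ R) {x y : F} (hx : x ∈ E)
    (hx1 : ‖x‖ ≤ 1) (hy : y ∈ T) (hyx : ‖y - x‖ ≤ r / 2) : ∃ z ∈ T, ‖z - x‖ ≤ 4 * κ * r := by
  have hr := h.scale_pos
  obtain ⟨z, hz, hdist⟩ := h.isClosed.exists_infDist_eq_dist ⟨y, hy⟩ x
  have hmin : ∀ z' ∈ T, ‖x - z‖ ≤ ‖x - z'‖ := fun z' hz' => by
    rw [← dist_eq_norm, ← dist_eq_norm, ← hdist]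
    exact infDist_le_dist_of_mem hz'
  have hxz : ‖x - z‖ ≤ r / 2 := (hmin y hy).trans (by rwa [norm_sub_rev])
  have hzR : ‖z‖ ≤ R := by linarith [norm_le_norm_add_norm_sub x z, h.scale_le]
  set v := (D x).starProjection (x - z)
  have hvz : ‖v‖ ≤ ‖x - z‖ := (D x).norm_starProjection_apply_le _
  obtain ⟨z', hz', hz'v⟩ := h.exists_step z hz hzR x hx (by linarith) v
    ((D x).starProjection_apply_mem _) (hvz.trans hxz)
  obtain ⟨e, he, hze⟩ := h.exists_near z hz hzR
  have hex : ‖e - x‖ < 100 * r := by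
    linarith [norm_sub_le_norm_sub_add_norm_sub e z x, norm_sub_rev e z, norm_sub_rev z x,
      h.accuracy_mul_scale_le]
  have hnormal : ‖x - z - v‖ ≤ 2 * (κ * r) := by
    rw [← Submodule.starProjection_orthogonal_val, ← norm_neg, ← map_neg, neg_sub,
      ← sub_add_sub_cancel z e x, map_add]
    calc _ ≤ κ * r + δ * r := (norm_add_le _ _).trans (add_le_add
          (((D x)ᗮ.norm_starProjection_apply_le _).trans hze)
          (hflat.normal_le x hx (by linarith) e he hex))
      _ ≤ 2 * (κ * r) := by linarith [mul_le_mul_of_nonneg_right hδκ hr.le]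
  have hxz' : ‖x - z'‖ ≤ ‖x - z - v‖ + ‖z' - z - v‖ := by
    rw [← sub_sub_sub_cancel_right x z' z, ← sub_sub_sub_cancel_right _ _ v]
    exact norm_sub_le _ _
  refine ⟨z, hz, ?_⟩
  rw [norm_sub_rev]
  linarith [hmin z' hz']

end IsApproxAtScale

end Approximation

section Limit

open Filter Topology

lemma isClosedMap_of_norm_sub_self_le {F : Type*} [NormedAddCommGroup F] [ProperSpace F]
    {g : F → F} {c : ℝ} (hg : Continuous g) (hc : ∀ x, ‖g x - x‖ ≤ c) : IsClosedMap g := by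
  refine (isProperMap_iff_tendsto_cocompact.2 ⟨hg, ?_⟩).isClosedMap
  rw [← Metric.cobounded_eq_cocompact, ← tendsto_norm_atTop_iff_cobounded]
  refine tendsto_atTop_mono (fun x => ?_) (tendsto_atTop_add_const_right _ (-c)
    (tendsto_norm_cobounded_atTop (E := F)))
  linarith [norm_le_norm_add_norm_sub (g x) x, hc x]

lemma tendsto_mul_half_pow (c : ℝ) : Tendsto (fun k : ℕ => c * (1 / 2) ^ k) atTop (𝓝 0) := by
  simpa using (tendsto_pow_atTop_nhds_zero_of_lt_one (by norm_num : (0 : ℝ) ≤ 1 / 2)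
    (by norm_num)).const_mul c

lemma mem_of_norm_sub_le_mul_half_pow {F : Type*} [SeminormedAddCommGroup F] {s : Set F}
    (hs : IsClosed s) {u : ℕ → F} (hu : ∀ k, u k ∈ s) {a : F} {c : ℝ}
    (ha : ∀ k, ‖u k - a‖ ≤ c * (1 / 2) ^ k) : a ∈ s :=
  hs.mem_of_tendsto (tendsto_iff_norm_sub_tendsto_zero.2
    (squeeze_zero (fun _ => norm_nonneg _) ha (tendsto_mul_half_pow c))) (.of_forall hu)

lemma rpow_le_one_sub_pow {η τ t : ℝ} (hτ : 0 ≤ τ) (hητ : (3 / 4) ^ τ ≤ 1 - η) (ht : 0 ≤ t)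
    {k : ℕ} (htk : t ≤ (3 / 4) ^ k) : t ^ τ ≤ (1 - η) ^ k := by
  calc t ^ τ ≤ ((3 / 4 : ℝ) ^ k) ^ τ := by gcongr
    _ = ((3 / 4 : ℝ) ^ τ) ^ k := (Real.rpow_pow_comm (by norm_num) τ k).symm
    _ ≤ (1 - η) ^ k := by gcongr

-- As `1 / 2 < (1 - η) * (3 / 4)`, the scale `(1 / 2) ^ k` of the perturbation of order `k` is
-- eventually much smaller than the factor `(1 - η) ^ k` by which the distances may have decreased.
lemma exists_half_pow_le {η τ t : ℝ} (hη : η ≤ 1 / 100) (hτ : 0 ≤ τ) (hητ : (3 / 4) ^ τ ≤ 1 - η)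
    (ht : 0 < t) (ht1 : t ≤ 1) :
    ∃ k : ℕ, t ^ τ ≤ (1 - η) ^ k ∧ (1 / 2) ^ k ≤ 4 / 3 * ((1 - η) ^ k * t) := by
  obtain ⟨k, hkt, htk⟩ := exists_nat_pow_near_of_lt_one ht ht1 (y := (3 / 4 : ℝ)) (by norm_num)
    (by norm_num)
  refine ⟨k, rpow_le_one_sub_pow hτ hητ ht.le htk, ?_⟩
  have h1η : 0 ≤ 1 - η := by linarith
  calc ((1 : ℝ) / 2) ^ k ≤ ((1 - η) * (3 / 4)) ^ k := by gcongr; linarith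
    _ = (1 - η) ^ k * (3 / 4) ^ k := mul_pow _ _ _
    _ ≤ (1 - η) ^ k * (4 / 3 * t) := by gcongr; linarith [pow_succ (3 / 4 : ℝ) k]
    _ = 4 / 3 * ((1 - η) ^ k * t) := by ring

/-- Each map of the sequence `G` is obtained by composing the previous one with an `η`-small
perturbation of the identity, whose scale is divided by `2` at each step. -/
structure IsPerturbationSeq {F : Type*} [NormedAddCommGroup F] (η : ℝ) (G : ℕ → F → F) :
    Prop where
  zero : G 0 = id
  succ : ∀ k, ∃ φ, IsSmallAtScaleOn η ((1 / 2) ^ k) univ φ ∧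
    G (k + 1) = (fun x => x + φ x) ∘ G k

namespace IsPerturbationSeq

variable {F : Type*} [NormedAddCommGroup F] {η τ : ℝ} {G : ℕ → F → F} {g : F → F}

lemma norm_sub_le (h : IsPerturbationSeq η G) (hη0 : 0 ≤ η) (k : ℕ) (x y : F) :
    ‖G k x - G k y‖ ≤ (1 + η) ^ k * ‖x - y‖ := by
  induction k with
  | zero => simp [h.zero]
  | succ k ih =>
    obtain ⟨φ, hφ, hG⟩ := h.succ k
    rw [hG, pow_succ', mul_assoc]
    exact (hφ.norm_add_sub_add_le (mem_univ _) (mem_univ _)).trans (by gcongr)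

lemma le_norm_sub (h : IsPerturbationSeq η G) (hη : η ≤ 1) (k : ℕ) (x y : F) :
    (1 - η) ^ k * ‖x - y‖ ≤ ‖G k x - G k y‖ := by
  have : 0 ≤ 1 - η := by linarith
  induction k with
  | zero => simp [h.zero]
  | succ k ih =>
    obtain ⟨φ, hφ, hG⟩ := h.succ k
    rw [hG, pow_succ', mul_assoc]
    exact le_trans (by gcongr) (hφ.le_norm_add_sub_add (mem_univ _) (mem_univ _))

lemma isHomeomorph [NormedSpace ℝ F] [CompleteSpace F] (h : IsPerturbationSeq η G) (hη : η < 1)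
    (k : ℕ) : IsHomeomorph (G k) := by
  induction k with
  | zero => exact h.zero ▸ IsHomeomorph.id
  | succ k ih =>
    obtain ⟨φ, hφ, hG⟩ := h.succ k
    exact hG ▸ (hφ.isHomeomorph_add hη).comp ih

lemma exists_limit [CompleteSpace F] (h : IsPerturbationSeq η G) :
    ∃ g : F → F, ∀ k x, ‖g x - G k x‖ ≤ 2 * η * (1 / 2) ^ k := by
  have hstep : ∀ x k, dist (G k x) (G (k + 1) x) ≤ 2 * η / 2 / 2 ^ k := fun x k => by
    obtain ⟨φ, hφ, hG⟩ := h.succ k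
    rw [hG, Function.comp_apply, dist_self_add_right]
    refine (hφ.norm_le _ (mem_univ _)).trans_eq ?_
    rw [one_div, inv_pow]
    ring
  choose g hg using fun x => cauchySeq_tendsto_of_complete
    (cauchySeq_of_le_geometric_two (hstep x))
  refine ⟨g, fun k x => ?_⟩
  rw [one_div, inv_pow, ← div_eq_mul_inv, ← dist_eq_norm']
  exact dist_le_of_le_geometric_two_of_tendsto (hstep x) (hg x) k

lemma norm_limit_sub_self_le (h : IsPerturbationSeq η G)
    (hg : ∀ k x, ‖g x - G k x‖ ≤ 2 * η * (1 / 2) ^ k) (x : F) : ‖g x - x‖ ≤ 2 * η := by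
  simpa [h.zero] using hg 0 x

lemma norm_limit_sub_sub_le (hg : ∀ k x, ‖g x - G k x‖ ≤ 2 * η * (1 / 2) ^ k) (k : ℕ) (x y : F) :
    ‖g x - g y - (G k x - G k y)‖ ≤ 4 * η * (1 / 2) ^ k := by
  rw [sub_sub_sub_comm]
  exact (_root_.norm_sub_le _ _).trans (by linarith [hg k x, hg k y])

lemma norm_limit_sub_le (h : IsPerturbationSeq η G) (hη0 : 0 ≤ η) (hη : η ≤ 1 / 100) (hτ : 0 ≤ τ)
    (hτ1 : τ ≤ 1) (hητ : (3 / 4) ^ τ ≤ 1 - η) (hg : ∀ k x, ‖g x - G k x‖ ≤ 2 * η * (1 / 2) ^ k)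
    {x y : F} (hxy : 0 < ‖x - y‖) (hxy1 : ‖x - y‖ ≤ 1) :
    ‖g x - g y‖ ≤ 3 * ‖x - y‖ ^ (1 - τ) := by
  set t := ‖x - y‖
  obtain ⟨k, htk, hk⟩ := exists_half_pow_le hη hτ hητ hxy hxy1
  have hpow : (1 + η) ^ k * t ≤ t ^ (1 - τ) := by
    rw [Real.rpow_sub hxy, Real.rpow_one, le_div_iff₀ (Real.rpow_pos_of_pos hxy τ)]
    calc (1 + η) ^ k * t * t ^ τ ≤ (1 + η) ^ k * t * (1 - η) ^ k := by gcongr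
      _ = ((1 + η) * (1 - η)) ^ k * t := by rw [mul_pow]; ring
      _ ≤ 1 * t := by
        gcongr
        exact pow_le_one₀ (mul_nonneg (by linarith) (by linarith)) (by nlinarith)
      _ = t := one_mul t
  have ht : t ≤ t ^ (1 - τ) := by
    simpa using Real.rpow_le_rpow_of_exponent_ge' hxy.le hxy1 (z := 1 - τ) (y := 1)
      (by linarith) (by linarith)
  have herr : 4 * η * (1 / 2) ^ k ≤ t ^ (1 - τ) := by
    calc 4 * η * (1 / 2) ^ k ≤ 4 * (1 / 100) * (4 / 3 * (1 * t)) := by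
          gcongr
          exact hk.trans (by gcongr; exact pow_le_one₀ (by linarith) (by linarith))
      _ ≤ t ^ (1 - τ) := by linarith
  have hGk := h.norm_sub_le hη0 k x y
  have := norm_le_norm_add_norm_sub' (g x - g y) (G k x - G k y)
  linarith [norm_limit_sub_sub_le hg k x y]

lemma le_norm_limit_sub (h : IsPerturbationSeq η G) (hη : η ≤ 1 / 100)
    (hτ : 0 ≤ τ) (hητ : (3 / 4) ^ τ ≤ 1 - η) (hg : ∀ k x, ‖g x - G k x‖ ≤ 2 * η * (1 / 2) ^ k)
    {x y : F} (hxy : 0 < ‖x - y‖) (hxy1 : ‖x - y‖ ≤ 1) :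
    1 / 4 * ‖x - y‖ ^ (1 + τ) ≤ ‖g x - g y‖ := by
  set t := ‖x - y‖
  obtain ⟨k, htk, hk⟩ := exists_half_pow_le hη hτ hητ hxy hxy1
  have hpow : t ^ (1 + τ) ≤ (1 - η) ^ k * t := by
    rw [add_comm, Real.rpow_add hxy, Real.rpow_one]
    gcongr
  have herr : 4 * η * (1 / 2) ^ k ≤ 3 / 4 * ((1 - η) ^ k * t) := by
    calc 4 * η * (1 / 2) ^ k ≤ 4 * (1 / 100) * (4 / 3 * ((1 - η) ^ k * t)) := by gcongr
      _ ≤ 3 / 4 * ((1 - η) ^ k * t) := by linarith [Real.rpow_nonneg hxy.le (1 + τ)]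
  have hGk := h.le_norm_sub (by linarith) k x y
  have := norm_le_norm_add_norm_sub (g x - g y) (G k x - G k y)
  linarith [norm_limit_sub_sub_le hg k x y]

lemma continuous_limit [NormedSpace ℝ F] [CompleteSpace F] (h : IsPerturbationSeq η G)
    (hη : η < 1) (hg : ∀ k x, ‖g x - G k x‖ ≤ 2 * η * (1 / 2) ^ k) : Continuous g := by
  have hunif : TendstoUniformly G g atTop := by
    rw [Metric.tendstoUniformly_iff]
    intro ε hε
    filter_upwards [(tendsto_mul_half_pow (2 * η)).eventually_lt_const hε] with k hk x
    exact dist_eq_norm (g x) _ ▸ (hg k x).trans_lt hk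
  exact hunif.continuous (.of_forall fun k => (h.isHomeomorph hη k).continuous)

lemma injective_limit (h : IsPerturbationSeq η G) (hη : η ≤ 1 / 100) (hτ : 0 ≤ τ)
    (hητ : (3 / 4) ^ τ ≤ 1 - η) (hg : ∀ k x, ‖g x - G k x‖ ≤ 2 * η * (1 / 2) ^ k) :
    Function.Injective g := fun x y hxy => by
  by_contra hne
  have hpos := norm_sub_pos_iff.2 hne
  have hgxy : ‖g x - g y‖ = 0 := by rw [hxy, sub_self, norm_zero]
  rcases le_total ‖x - y‖ 1 with hle | hle
  · linarith [h.le_norm_limit_sub hη hτ hητ hg hpos hle, Real.rpow_pos_of_pos hpos (1 + τ)]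
  · have hx := h.norm_limit_sub_self_le hg x
    have hy := h.norm_limit_sub_self_le hg y
    rw [hxy] at hx
    linarith [norm_sub_le_norm_sub_add_norm_sub x (g y) y, norm_sub_rev x (g y)]

lemma surjective_limit [NormedSpace ℝ F] [CompleteSpace F] (h : IsPerturbationSeq η G)
    (hη : η < 1) (hg : ∀ k x, ‖g x - G k x‖ ≤ 2 * η * (1 / 2) ^ k) (hclosed : IsClosedMap g) :
    Function.Surjective g := fun y => by
  choose x hx using fun k => (h.isHomeomorph hη k).surjective y
  refine mem_of_norm_sub_le_mul_half_pow hclosed.isClosed_range (fun k => mem_range_self (x k))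
    (c := 2 * η) fun k => ?_
  simpa only [hx k] using hg k (x k)

theorem exists_bijective_limit [NormedSpace ℝ F] [ProperSpace F] (h : IsPerturbationSeq η G)
    (hη0 : 0 ≤ η) (hη : η ≤ 1 / 100) (hτ : 0 ≤ τ) (hτ1 : τ < 1) (hητ : (3 / 4) ^ τ ≤ 1 - η) :
    ∃ g : F → F, Function.Bijective g ∧ IsClosedMap g ∧
      (∀ k x, ‖g x - G k x‖ ≤ 2 * η * (1 / 2) ^ k) ∧
      ∀ x y, ‖x - y‖ ≤ 1 → 1 / 4 * ‖x - y‖ ^ (1 + τ) ≤ ‖g x - g y‖ ∧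
        ‖g x - g y‖ ≤ 3 * ‖x - y‖ ^ (1 - τ) := by
  obtain ⟨g, hg⟩ := h.exists_limit
  have hη1 : η < 1 := by linarith
  have hclosed := isClosedMap_of_norm_sub_self_le (h.continuous_limit hη1 hg)
    (h.norm_limit_sub_self_le hg)
  refine ⟨g, ⟨h.injective_limit hη hτ hητ hg, h.surjective_limit hη1 hg hclosed⟩, hclosed, hg,
    fun x y hxy => ?_⟩
  rcases eq_or_ne x y with rfl | hne
  · simp [Real.zero_rpow (by linarith : 1 + τ ≠ 0), Real.zero_rpow (by linarith : 1 - τ ≠ 0)]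
  · have hpos := norm_sub_pos_iff.2 hne
    exact ⟨h.le_norm_limit_sub hη hτ hητ hg hpos hxy,
      h.norm_limit_sub_le hη0 hη hτ hτ1.le hητ hg hpos hxy⟩

end IsPerturbationSeq

end Limit

section Directions

variable {F : Type*} [NormedAddCommGroup F] [InnerProductSpace ℝ F]

-- `P_K P_L` is the adjoint of `P_L P_K`.
lemma norm_starProjection_starProjection_le [CompleteSpace F] {K L : Submodule ℝ F}
    [K.HasOrthogonalProjection] [L.HasOrthogonalProjection] {c : ℝ} (hc : 0 ≤ c)
    (h : ∀ v ∈ K, ‖L.starProjection v‖ ≤ c * ‖v‖) (w : F) :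
    ‖K.starProjection (L.starProjection w)‖ ≤ c * ‖w‖ := by
  have hLK : ‖L.starProjection * K.starProjection‖ ≤ c :=
    ContinuousLinearMap.opNorm_le_bound _ hc fun v =>
      (h _ (K.starProjection_apply_mem v)).trans
        (by gcongr; exact K.norm_starProjection_apply_le v)
  rw [← norm_star, star_mul, (isSelfAdjoint_starProjection L).star_eq,
    (isSelfAdjoint_starProjection K).star_eq] at hLK
  exact (K.starProjection * L.starProjection).le_of_opNorm_le hLK w

lemma norm_starProjection_sub_starProjection_le [CompleteSpace F] {K K' : Submodule ℝ F}
    [K.HasOrthogonalProjection] [K'.HasOrthogonalProjection] {c : ℝ} (hc : 0 ≤ c)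
    (h : ∀ v ∈ K, ‖K'ᗮ.starProjection v‖ ≤ c * ‖v‖)
    (h' : ∀ v ∈ K', ‖Kᗮ.starProjection v‖ ≤ c * ‖v‖) (w : F) :
    ‖K.starProjection w - K'.starProjection w‖ ≤ 2 * c * ‖w‖ := by
  have hsplit : K.starProjection w - K'.starProjection w =
      K.starProjection (K'ᗮ.starProjection w) - Kᗮ.starProjection (K'.starProjection w) := by
    simp only [Submodule.starProjection_orthogonal_val, map_sub]
    abel
  have hnormal := (h' _ (K'.starProjection_apply_mem w)).trans
    (mul_le_mul_of_nonneg_left (K'.norm_starProjection_apply_le w) hc)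
  rw [hsplit]
  exact (norm_sub_le _ _).trans
    (by linarith [norm_starProjection_starProjection_le hc h w])

lemma norm_apply_le_of_forall_norm_eq {G : Type*} [SeminormedAddCommGroup G] [NormedSpace ℝ G]
    {K : Submodule ℝ F} {f : F →ₗ[ℝ] G} {c t : ℝ} (ht : 0 < t)
    (h : ∀ v ∈ K, ‖v‖ = t → ‖f v‖ ≤ c * t) {v : F} (hv : v ∈ K) : ‖f v‖ ≤ c * ‖v‖ := by
  rcases eq_or_ne v 0 with rfl | hv0
  · simp
  have hpos := norm_pos_iff.2 hv0
  have hscale : ‖(t / ‖v‖) • v‖ = t := by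
    rw [norm_smul, Real.norm_of_nonneg (by positivity), div_mul_cancel₀ _ hpos.ne']
  have hsphere := h _ (K.smul_mem _ hv) hscale
  rw [map_smul, norm_smul, Real.norm_of_nonneg (by positivity), div_mul_eq_mul_div,
    div_le_iff₀ hpos] at hsphere
  exact le_of_mul_le_mul_left (by linarith) ht

lemma norm_starProjection_orthogonal_direction_le_infDist [FiniteDimensional ℝ F]
    (Q : AffineSubspace ℝ F) {x : F} (hx : x ∈ Q) (y : F) :
    ‖Q.directionᗮ.starProjection (y - x)‖ ≤ infDist y (Q : Set F) := by
  obtain ⟨p, hp, hyp⟩ := (Q.closed_of_finiteDimensional).exists_infDist_eq_dist ⟨x, hx⟩ y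
  have hpx : Q.directionᗮ.starProjection (p - x) = 0 :=
    Submodule.starProjection_orthogonal_apply_eq_zero (AffineSubspace.vsub_mem_direction hp hx)
  rw [hyp, dist_eq_norm, ← sub_add_sub_cancel y p x, map_add, hpx, add_zero]
  exact Submodule.norm_starProjection_apply_le _ _

end Directions

section Assembly

variable {F : Type*} [NormedAddCommGroup F] [InnerProductSpace ℝ F] [FiniteDimensional ℝ F]
  {E T : Set F} {D : F → ℝ → Submodule ℝ F} {P : F → ℝ → Set F} {ε κ η τ : ℝ} {G : ℕ → F → F}
  {g : F → F}

/-- At every point `x` of `E` of norm less than `10` and every scale `ρ ≤ 10`, the set `E` is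
`ε * ρ`-close to the plane through `x` of direction `D x ρ`. -/
structure IsFlatAlong (E : Set F) (D : F → ℝ → Submodule ℝ F) (ε : ℝ) : Prop where
  normal_le : ∀ x ∈ E, ‖x‖ < 10 → ∀ ρ, 0 < ρ → ρ ≤ 10 → ∀ y ∈ E, ‖y - x‖ < ρ →
    ‖(D x ρ)ᗮ.starProjection (y - x)‖ ≤ ε * ρ
  exists_near : ∀ x ∈ E, ‖x‖ < 10 → ∀ ρ, 0 < ρ → ρ ≤ 10 → ∀ v ∈ D x ρ, ‖v‖ < ρ →
    ∃ y ∈ E, ‖x + v - y‖ ≤ ε * ρ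

/-- `T` approximates `E` at the dyadic scale `(1 / 2) ^ k / 10`, with respect to the directions of
the planes which approximate `E` in the balls a hundred times larger. The radii `2 + (1 / 2) ^ k`
leave room for the loss of five times the scale at each step of the construction. -/
def IsDyadicApprox (E : Set F) (D : F → ℝ → Submodule ℝ F) (κ : ℝ) (k : ℕ) (T : Set F) : Prop :=
  IsApproxAtScale E (fun x => D x (10 * (1 / 2) ^ k)) κ ((1 / 2) ^ k / 10) (2 + (1 / 2) ^ k) T

namespace IsFlatAlong

lemma norm_orthogonal_starProjection_le (h : IsFlatAlong E D ε) (hε : 0 ≤ ε) (hε' : ε ≤ 1 / 100)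
    {x x' : F} {ρ ρ' t : ℝ} (ht : 0 < t) (ht1 : t ≤ 1) (hρ : ρ ∈ Icc (5 * t) (10 * t))
    (hρ' : ρ' ∈ Icc (5 * t) (10 * t)) (hx : x ∈ E) (hx10 : ‖x‖ < 10) (hx' : x' ∈ E)
    (hx'10 : ‖x'‖ < 10) (hxx' : ‖x - x'‖ ≤ 7 / 2 * t) {v : F} (hv : v ∈ D x ρ) :
    ‖(D x' ρ')ᗮ.starProjection v‖ ≤ 30 * ε * ‖v‖ := by
  refine norm_apply_le_of_forall_norm_eq (f := ((D x' ρ')ᗮ.starProjection : F →ₗ[ℝ] F)) ht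
    (fun v hv hvt => ?_) hv
  have hερ : ε * ρ ≤ ε * (10 * t) := by gcongr; exact hρ.2
  have hερ' : ε * ρ' ≤ ε * (10 * t) := by gcongr; exact hρ'.2
  have hεt : ε * (10 * t) ≤ 1 / 100 * (10 * t) := by gcongr
  obtain ⟨y, hy, hxy⟩ := h.exists_near x hx hx10 ρ (by linarith [hρ.1]) (by linarith [hρ.2]) v hv
    (by linarith [hρ.1])
  have hsum : y - x' = x - x' + v - (x + v - y) := by abel
  have hyx' : ‖y - x'‖ < ρ' := by
    rw [hsum]
    linarith [norm_sub_le (x - x' + v) (x + v - y), norm_add_le (x - x') v, hρ'.1]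
  have hnormal := h.normal_le x' hx' hx'10 ρ' (by linarith [hρ'.1]) (by linarith [hρ'.2])
  have hnormaly := hnormal y hy hyx'
  have hnormalx := hnormal x hx (by linarith [hρ'.1])
  have hclose := ((D x' ρ')ᗮ.norm_starProjection_apply_le (x + v - y)).trans hxy
  have hdecomp : v = x + v - y + (y - x') - (x - x') := by abel
  rw [ContinuousLinearMap.coe_coe, hdecomp, map_sub, map_add]
  refine (norm_sub_le _ _).trans ((add_le_add_left (norm_add_le _ _) _).trans ?_)
  linarith

lemma norm_starProjection_sub_le (h : IsFlatAlong E D ε) (hε : 0 ≤ ε) (hε' : ε ≤ 1 / 100)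
    {x x' : F} {ρ ρ' t : ℝ} (ht : 0 < t) (ht1 : t ≤ 1) (hρ : ρ ∈ Icc (5 * t) (10 * t))
    (hρ' : ρ' ∈ Icc (5 * t) (10 * t)) (hx : x ∈ E) (hx10 : ‖x‖ < 10) (hx' : x' ∈ E)
    (hx'10 : ‖x'‖ < 10) (hxx' : ‖x - x'‖ ≤ 7 / 2 * t) (w : F) :
    ‖(D x ρ).starProjection w - (D x' ρ').starProjection w‖ ≤ 60 * ε * ‖w‖ := by
  have := FiniteDimensional.complete ℝ F
  have hKK' := norm_starProjection_sub_starProjection_le (by positivity)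
    (fun v hv => h.norm_orthogonal_starProjection_le hε hε' ht ht1 hρ hρ' hx hx10 hx' hx'10 hxx' hv)
    (fun v hv => h.norm_orthogonal_starProjection_le hε hε' ht ht1 hρ' hρ hx' hx'10 hx hx10
      (by rwa [norm_sub_rev]) hv) w
  linarith

lemma isTiltLE (h : IsFlatAlong E D ε) (hε : 0 ≤ ε) (hε' : ε ≤ 1 / 100) {ρ ρ' t : ℝ} (ht : 0 < t)
    (ht1 : t ≤ 1) (hρ : ρ ∈ Icc (5 * t) (10 * t)) (hρ' : ρ' ∈ Icc (5 * t) (10 * t)) :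
    IsTiltLE E (D · ρ) (D · ρ') (60 * ε) (t / 10) := fun _ hx hx4 _ hx' hx'4 hxx' =>
  h.norm_starProjection_sub_le hε hε' ht ht1 hρ hρ' hx (by linarith) hx' (by linarith)
    (by linarith)

lemma isFlatAtScale (h : IsFlatAlong E D ε) (hε : 0 ≤ ε) (hε' : ε ≤ 1 / 100) {t : ℝ} (ht : 0 < t)
    (ht1 : t ≤ 1) : IsFlatAtScale E (D · (10 * t)) (100 * ε) (t / 10) where
  normal_le x hx hx4 y hy hyx := (h.normal_le x hx (by linarith) _ (by positivity) (by linarith) y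
    hy (by linarith)).trans_eq (by ring)
  exists_near x hx hx4 v hv hvt := (h.exists_near x hx (by linarith) _ (by positivity)
    (by linarith) v hv (by linarith)).imp fun y hy => ⟨hy.1, hy.2.trans_eq (by ring)⟩
  tilt_le x hx hx4 x' hx' hx'4 hxx' w := by
    have hρ : 10 * t ∈ Icc (5 * t) (10 * t) := ⟨by linarith, le_rfl⟩
    exact (h.isTiltLE hε hε' ht ht1 hρ hρ x hx hx4 x' hx' hx'4 hxx' w).trans (by gcongr; norm_num)

lemma isDyadicApprox_zero (h : IsFlatAlong E D ε) (hE0 : 0 ∈ E) (hε : 0 ≤ ε) (hεκ : 100 * ε ≤ κ)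
    (hκ : κ ≤ 1 / 100) : IsDyadicApprox E D κ 0 (D 0 10) := by
  have htilt : ∀ y : F, ‖y‖ ≤ 3 → ∀ x ∈ E, ‖x - y‖ ≤ 1 / 10 → ∀ w,
      ‖(D x 10).starProjection w - (D 0 10).starProjection w‖ ≤ κ * ‖w‖ := fun y hy x hx hxy w => by
    have hx4 : ‖x‖ ≤ 7 / 2 := by linarith [norm_le_norm_add_norm_sub y x, norm_sub_rev x y]
    have hρ : (10 : ℝ) ∈ Icc (5 * 1) (10 * 1) := by norm_num
    exact (h.norm_starProjection_sub_le hε (by linarith) one_pos le_rfl hρ hρ hx (by linarith) hE0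
      (by simp) (by simpa using hx4) w).trans (by gcongr; linarith)
  unfold IsDyadicApprox
  norm_num only
  refine ⟨⟨by linarith, hκ, by norm_num, by norm_num, by norm_num⟩,
    (D 0 10).closed_of_finiteDimensional, fun y hy hy3 => ?_,
    fun y hy hy3 y' hy' _ _ x hx hxy => ?_, fun y hy hy3 x hx hxy v hv _ => ?_⟩
  · obtain ⟨e, he, hye⟩ := h.exists_near 0 hE0 (by simp) 10 (by norm_num) le_rfl y hy (by linarith)
    rw [zero_add] at hye
    exact ⟨e, he, hye.trans (by linarith)⟩
  · have hyy' := htilt y hy3 x hx hxy (y - y')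
    rwa [Submodule.starProjection_eq_self_iff.2 ((D 0 10).sub_mem hy hy'), norm_sub_rev,
      ← Submodule.starProjection_orthogonal_val] at hyy'
  · refine ⟨y + (D 0 10).starProjection v,
      (D 0 10).add_mem hy ((D 0 10).starProjection_apply_mem v), ?_⟩
    have hvv := htilt y hy3 x hx hxy v
    rw [Submodule.starProjection_eq_self_iff.2 hv, norm_sub_rev] at hvv
    rw [add_sub_cancel_left]
    exact hvv.trans (by rw [div_eq_inv_mul]; gcongr; linarith)

lemma exists_perturbation (h : IsFlatAlong E D ε) (hE : IsClosed E) (hε : 0 ≤ ε)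
    (hεκ : glueConst F * (100 * ε) ≤ κ / 4)
    (hκη : (1 + lipschitzExtensionConstant F) * (4 * κ) ≤ η) (hη : η ≤ 1 / 100) {k : ℕ}
    (hT : IsDyadicApprox E D κ k T) :
    ∃ φ : F → F, IsSmallAtScaleOn η ((1 / 2) ^ k) univ φ ∧
      IsDyadicApprox E D κ (k + 1) ((fun x => x + φ x) '' T) := by
  have hκ := hT.accuracy_nonneg
  have hεκ' : 100 * ε ≤ κ / 4 :=
    (le_mul_of_one_le_left (by positivity) (one_le_glueConst F)).trans hεκ
  have hε' : ε ≤ 1 / 100 := by linarith [hT.accuracy_le]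
  have hη0 : 0 ≤ η := le_trans (by positivity) hκη
  have ht : (0 : ℝ) < (1 / 2) ^ k := by positivity
  have ht1 : (1 / 2 : ℝ) ^ k ≤ 1 := pow_le_one₀ (by norm_num) (by norm_num)
  have htilt : IsTiltLE E (D · (10 * (1 / 2) ^ k)) (D · (10 * (1 / 2) ^ (k + 1))) (κ / 4)
      ((1 / 2) ^ k / 10) := fun x hx hx4 x' hx' hx'4 hxx' w =>
    (h.isTiltLE hε hε' ht ht1 ⟨by linarith, le_rfl⟩
      ⟨by linarith [pow_succ (1 / 2 : ℝ) k], by linarith [pow_succ (1 / 2 : ℝ) k]⟩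
      x hx hx4 x' hx' hx'4 hxx' w).trans (by gcongr; linarith)
  obtain ⟨φ, hφ, hφT⟩ := hT.exists_perturbation hE (h.isFlatAtScale hε hε' ht ht1) htilt
    (by positivity) hεκ hκη hη
  refine ⟨φ, hφ.mono_scale hη0 (by linarith), ?_⟩
  unfold IsDyadicApprox
  convert hφT using 1 <;> ring

lemma exists_isPerturbationSeq (h : IsFlatAlong E D ε) (hE : IsClosed E) (hE0 : 0 ∈ E)
    (hε : 0 ≤ ε) (hκ : κ ≤ 1 / 100) (hεκ : glueConst F * (100 * ε) ≤ κ / 4)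
    (hκη : (1 + lipschitzExtensionConstant F) * (4 * κ) ≤ η) (hη : η ≤ 1 / 100) :
    ∃ G : ℕ → F → F, IsPerturbationSeq η G ∧ ∀ k, IsDyadicApprox E D κ k (G k '' D 0 10) := by
  choose! φ hφ hφT using fun k (T : Set F) (hT : IsDyadicApprox E D κ k T) =>
    h.exists_perturbation hE hε hεκ hκη hη hT
  let G : ℕ → F → F := fun k =>
    k.rec id fun k Gk => (fun x => x + φ k (Gk '' D 0 10) x) ∘ Gk
  have hG : ∀ k, IsDyadicApprox E D κ k (G k '' D 0 10) := fun k => by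
    induction k with
    | zero =>
      have hεκ' : 100 * ε ≤ κ / 4 :=
        (le_mul_of_one_le_left (by positivity) (one_le_glueConst F)).trans hεκ
      exact (image_id (D 0 10 : Set F)).symm ▸ h.isDyadicApprox_zero hE0 hε (by linarith) hκ
    | succ k ih =>
      change IsDyadicApprox E D κ (k + 1) ((fun x => x + φ k (G k '' D 0 10) x) ∘ G k '' D 0 10)
      rw [image_comp]
      exact hφT k _ ih
  exact ⟨G, ⟨rfl, fun k => ⟨_, hφ k _ (hG k), rfl⟩⟩, hG⟩

lemma exists_norm_sub_le (h : IsFlatAlong E D ε) (hE0 : 0 ∈ E) (hε : 0 ≤ ε) (hεκ : 100 * ε ≤ κ)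
    (hη : η ≤ 1 / 100) (hG : IsPerturbationSeq η G)
    (hT : ∀ k, IsDyadicApprox E D κ k (G k '' D 0 10)) {e : F} (he : e ∈ E) (he1 : ‖e‖ ≤ 1)
    (k : ℕ) : ∃ x ∈ D 0 10, ‖G k x - e‖ ≤ 4 * κ * ((1 / 2) ^ k / 10) := by
  have hκ := (hT 0).accuracy_le
  induction k with
  | zero =>
    have hnormal := h.normal_le 0 hE0 (by simp) 10 (by norm_num) le_rfl e he
      (by rw [sub_zero]; linarith)
    rw [sub_zero, Submodule.starProjection_orthogonal_val, norm_sub_rev] at hnormal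
    refine ⟨_, (D 0 10).starProjection_apply_mem e, ?_⟩
    rw [hG.zero, pow_zero]
    exact hnormal.trans (by linarith)
  | succ k ih =>
    obtain ⟨x, hx, hxe⟩ := ih
    obtain ⟨φ, hφ, hGk⟩ := hG.succ k
    have ht : (0 : ℝ) < (1 / 2) ^ k := by positivity
    have hclose : ‖G (k + 1) x - e‖ ≤ (1 / 2) ^ (k + 1) / 10 / 2 := by
      have hφx : ‖φ (G k x)‖ ≤ 1 / 100 * (1 / 2) ^ k :=
        (hφ.norm_le _ (mem_univ _)).trans (by gcongr)
      have hκt : κ * ((1 / 2) ^ k / 10) ≤ 1 / 100 * ((1 / 2) ^ k / 10) := by gcongr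
      rw [hGk, Function.comp_apply, add_sub_right_comm, pow_succ]
      linarith [norm_add_le (G k x - e) (φ (G k x))]
    obtain ⟨_, ⟨z, hz, rfl⟩, hze⟩ := (hT (k + 1)).exists_close_of_exists_close
      (h.isFlatAtScale hε (by linarith) (by positivity)
        (pow_le_one₀ (by norm_num) (by norm_num))) hεκ
      (le_add_of_nonneg_right (by positivity)) he he1 (mem_image_of_mem _ hx) hclose
    exact ⟨z, hz, hze⟩

end IsFlatAlong

lemma image_inter_ball_subset (hE : IsClosed E) (hη : η ≤ 1 / 100)
    (hT : ∀ k, IsDyadicApprox E D κ k (G k '' T))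
    (hg : ∀ k x, ‖g x - G k x‖ ≤ 2 * η * (1 / 2) ^ k) : g '' T ∩ ball 0 1 ⊆ E := by
  rintro _ ⟨⟨x, hx, rfl⟩, hgx⟩
  rw [mem_ball_zero_iff] at hgx
  have hnear : ∀ k, ∃ y ∈ E, ‖G k x - y‖ ≤ κ * ((1 / 2) ^ k / 10) := fun k => by
    refine (hT k).exists_near _ (mem_image_of_mem _ hx) ?_
    have ht : (0 : ℝ) < (1 / 2) ^ k := by positivity
    have hηt : 2 * η * (1 / 2) ^ k ≤ 2 * (1 / 100) * (1 / 2) ^ k := by gcongr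
    linarith [hg k x, norm_le_norm_add_norm_sub (g x) (G k x)]
  choose y hy hxy using hnear
  refine mem_of_norm_sub_le_mul_half_pow hE hy (c := 2 * η + κ / 10) fun k => ?_
  rw [norm_sub_rev, ← sub_add_sub_cancel _ (G k x)]
  exact (norm_add_le _ _).trans (by linarith [hg k x, hxy k])

lemma IsFlatAlong.inter_ball_subset_image (h : IsFlatAlong E D ε) (hE0 : 0 ∈ E) (hε : 0 ≤ ε)
    (hεκ : 100 * ε ≤ κ) (hη : η ≤ 1 / 100) (hG : IsPerturbationSeq η G)
    (hT : ∀ k, IsDyadicApprox E D κ k (G k '' D 0 10)) (hclosed : IsClosedMap g)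
    (hg : ∀ k x, ‖g x - G k x‖ ≤ 2 * η * (1 / 2) ^ k) : E ∩ ball 0 1 ⊆ g '' D 0 10 := by
  rintro e ⟨he, he1⟩
  choose x hx hxe using
    h.exists_norm_sub_le hE0 hε hεκ hη hG hT he (mem_ball_zero_iff.1 he1).le
  refine mem_of_norm_sub_le_mul_half_pow (hclosed _ (D 0 10).closed_of_finiteDimensional)
    (fun k => mem_image_of_mem g (hx k)) (c := 2 * η + 4 * κ / 10) fun k => ?_
  rw [← sub_add_sub_cancel _ (G k (x k))]
  exact (norm_add_le _ _).trans (by linarith [hg k (x k), hxe k])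

theorem IsFlatAlong.exists_bijective (h : IsFlatAlong E D ε) (hE : IsClosed E) (hE0 : 0 ∈ E)
    (hε : 0 ≤ ε) (hεκ : glueConst F * (100 * ε) ≤ κ / 4)
    (hκη : (1 + lipschitzExtensionConstant F) * (4 * κ) ≤ η) (hη : η ≤ 1 / 100) (hητ : 2 * η ≤ τ)
    (hτ1 : τ < 1) (hητ34 : (3 / 4) ^ τ ≤ 1 - η) :
    ∃ g : F → F, Function.Bijective g ∧ (∀ x, dist (g x) x ≤ τ) ∧
      (∀ x y, dist x y ≤ 1 → 1 / 4 * dist x y ^ (1 + τ) ≤ dist (g x) (g y) ∧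
        dist (g x) (g y) ≤ 3 * dist x y ^ (1 - τ)) ∧
      E ∩ ball 0 1 = g '' D 0 10 ∩ ball 0 1 := by
  have hεκ' : 100 * ε ≤ κ / 4 :=
    (le_mul_of_one_le_left (by positivity) (one_le_glueConst F)).trans hεκ
  have hκη' : 4 * κ ≤ η := (le_mul_of_one_le_left (by linarith) (by simp)).trans hκη
  have hη0 : 0 ≤ η := by linarith
  obtain ⟨G, hG, hT⟩ := h.exists_isPerturbationSeq hE hE0 hε (by linarith) hεκ hκη hη
  obtain ⟨g, hbij, hclosed, hg, hholder⟩ :=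
    hG.exists_bijective_limit hη0 hη (by linarith) hτ1 hητ34
  simp only [dist_eq_norm]
  refine ⟨g, hbij, fun x => (hG.norm_limit_sub_self_le hg x).trans hητ, hholder, ?_⟩
  exact Subset.antisymm
    (subset_inter (h.inter_ball_subset_image hE0 hε (by linarith) hη hG hT hclosed hg)
      inter_subset_right)
    (subset_inter (image_inter_ball_subset hE hη hT hg) inter_subset_right)

/-- At every point `x` of `E` in the ball of radius `10` and every scale `r ≤ 10`, the set `P x r`
is an affine plane through `x`, of any dimension, and is `ε * r`-close to `E` in both directions. -/
def IsReifenbergFlat (E : Set F) (P : F → ℝ → Set F) (ε : ℝ) : Prop :=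
  ∀ x ∈ E ∩ ball 0 10, ∀ r, 0 < r → r ≤ 10 →
    (∃ Q : AffineSubspace ℝ F, (Q : Set F) = P x r) ∧ x ∈ P x r ∧
    (∀ y ∈ E ∩ ball x r, infDist y (P x r) ≤ ε * r) ∧
    (∀ y ∈ P x r ∩ ball x r, infDist y E ≤ ε * r)

lemma IsReifenbergFlat.exists_isFlatAlong (h : IsReifenbergFlat E P ε) (hE : IsClosed E)
    (hE0 : 0 ∈ E) :
    ∃ D : F → ℝ → Submodule ℝ F, IsFlatAlong E D ε ∧ (D 0 10 : Set F) = P 0 10 := by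
  choose! Q hQ using fun x hx r hr hr' => (h x hx r hr hr').1
  refine ⟨fun x r => (Q x r).direction, ⟨fun x hx hx10 r hr hr' y hy hyx => ?_,
    fun x hx hx10 r hr hr' v hv hvr => ?_⟩, ?_⟩
  · have hxE : x ∈ E ∩ ball 0 10 := ⟨hx, mem_ball_zero_iff.2 hx10⟩
    obtain ⟨-, hxP, hEP, -⟩ := h x hxE r hr hr'
    rw [← hQ x hxE r hr hr'] at hxP hEP
    exact (norm_starProjection_orthogonal_direction_le_infDist _ hxP y).trans
      (hEP y ⟨hy, mem_ball_iff_norm.2 hyx⟩)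
  · have hxE : x ∈ E ∩ ball 0 10 := ⟨hx, mem_ball_zero_iff.2 hx10⟩
    obtain ⟨-, hxP, -, hPE⟩ := h x hxE r hr hr'
    rw [← hQ x hxE r hr hr'] at hxP hPE
    obtain ⟨y, hy, hyd⟩ := hE.exists_infDist_eq_dist ⟨x, hx⟩ (x + v)
    refine ⟨y, hy, ?_⟩
    rw [← dist_eq_norm, ← hyd]
    refine hPE _ ⟨?_, by rwa [mem_ball_iff_norm, add_sub_cancel_left]⟩
    rw [add_comm]
    exact AffineSubspace.vadd_mem_of_mem_direction hv hxP
  · have h0E : (0 : F) ∈ E ∩ ball 0 10 := ⟨hE0, by simp⟩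
    have h0Q : (0 : F) ∈ (Q 0 10 : Set F) := by
      rw [hQ 0 h0E 10 (by norm_num) le_rfl]
      exact (h 0 h0E 10 (by norm_num) le_rfl).2.1
    rw [← hQ 0 h0E 10 (by norm_num) le_rfl]
    exact congrArg ((↑) : AffineSubspace ℝ F → Set F)
      (AffineSubspace.direction_eq_self_iff_zero_mem.2 h0Q)

theorem reifenberg_topological_disk_general (F : Type*) [NormedAddCommGroup F]
    [InnerProductSpace ℝ F] [FiniteDimensional ℝ F] (hτ : 0 < τ) (hτ1 : τ < 1) :
    ∃ ε > 0, ∀ (E : Set F), IsClosed E → 0 ∈ E → ∀ P : F → ℝ → Set F, IsReifenbergFlat E P ε →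
      ∃ g : F → F, Function.Bijective g ∧ (∀ x, dist (g x) x ≤ τ) ∧
        (∀ x y, dist x y ≤ 1 → 1 / 4 * dist x y ^ (1 + τ) ≤ dist (g x) (g y) ∧
          dist (g x) (g y) ≤ 3 * dist x y ^ (1 - τ)) ∧
        E ∩ ball 0 1 = g '' P 0 10 ∩ ball 0 1 := by
  have hτ34 : (3 / 4 : ℝ) ^ τ < 1 := Real.rpow_lt_one (by norm_num) (by norm_num) hτ
  have hglue := one_le_glueConst F
  obtain ⟨η, hη0, hη⟩ : ∃ η : ℝ, 0 < η ∧ η ≤ min (1 / 100) (min (τ / 2) (1 - (3 / 4) ^ τ)) :=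
    ⟨_, lt_min (by norm_num) (lt_min (by positivity) (by linarith)), le_rfl⟩
  obtain ⟨hη, hητ, hητ34⟩ := by simpa only [le_min_iff] using hη
  obtain ⟨κ, hκ0, hκη⟩ : ∃ κ > 0, (1 + lipschitzExtensionConstant F) * (4 * κ) = η :=
    ⟨η / (4 * (1 + lipschitzExtensionConstant F)), by positivity, by field_simp⟩
  obtain ⟨ε, hε, hεκ⟩ : ∃ ε > 0, glueConst F * (100 * ε) = κ / 4 :=
    ⟨κ / (400 * glueConst F), by positivity, by field_simp; norm_num⟩
  refine ⟨ε, hε, fun E hE hE0 P hP => ?_⟩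
  obtain ⟨D, hD, hD0⟩ := hP.exists_isFlatAlong hE hE0
  exact hD0 ▸ hD.exists_bijective hE hE0 hε.le hεκ.le hκη.le hη (by linarith) hτ1 (by linarith)

end Assembly

/-- **Reifenberg's topological disk theorem** (Theorem 1.1). -/
theorem reifenberg_topological_disk (n d : ℕ) (hd : 0 < d) (hdn : d < n)
    (τ : ℝ) (hτ : 0 < τ) (hτ' : τ < 10⁻¹) :
    ∃ ε : ℝ, 0 < ε ∧
      ∀ E : Set (V n), IsClosed E → (0 : V n) ∈ E →
      ∀ P : V n → ℝ → Set (V n),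
      (∀ x ∈ E ∩ ball (0 : V n) 10, ∀ r : ℝ, 0 < r → r ≤ 10 →
        IsAffinePlane n d (P x r) ∧ x ∈ P x r ∧
        (∀ y ∈ E ∩ ball x r, infDist y (P x r) ≤ ε * r) ∧
        (∀ y ∈ P x r ∩ ball x r, infDist y E ≤ ε * r)) →
      ∃ g : V n → V n, Function.Bijective g ∧
        (∀ x : V n, dist (g x) x ≤ τ) ∧
        (∀ x y : V n, dist x y ≤ 1 →
          (1 / 4 : ℝ) * dist x y ^ (1 + τ) ≤ dist (g x) (g y) ∧
          dist (g x) (g y) ≤ 3 * dist x y ^ (1 - τ)) ∧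
        E ∩ ball (0 : V n) 1 = g '' (P 0 10) ∩ ball (0 : V n) 1 := by
  obtain ⟨ε, hε, h⟩ := reifenberg_topological_disk_general (V n) hτ (hτ'.trans (by norm_num))
  exact ⟨ε, hε, fun E hE hE0 P hP => h E hE hE0 P fun x hx r hr hr' =>
    (hP x hx r hr hr').imp_left fun ⟨Q, hQ, _⟩ => ⟨Q, hQ⟩⟩
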